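/- arXiv:0805.3522 — 2 statements merged into one kernel-verified Lean document; each statement's English description precedes it below -/
import Mathlib

section
/- (The 2|G|/3 Theorem.) Let S be a finite generating subset of an abelian group G of order at least 2, and T a finite subset of G with |S| ≤ |T|, S + T aperiodic, 0 ∈ S ∩ T, and (2|G| + 2)/3 ≥ |S + T| = |S| + |T| - 1. Let H be a hyper-atom of S and φ : G → G/H the canonical morphism. Then S and T are H-quasi-periodic, and φ(S) and φ(T) are arithmetic progressions in G/H with the same difference. -/
open scoped Pointwise Classical

/-- The `k`-th connectivity `κ_k(S)`: minimum of `|X + S| - |X|` over finite `X`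
with `|X| ≥ k` and `|X + S| ≤ |G| - k`, with `min ∅ = |G| - 2k + 1`. -/
noncomputable def kappa {G : Type*} [AddCommGroup G] [DecidableEq G]
    (k : ℕ) (S : Finset G) : ℕ :=
  if ∃ X : Finset G, k ≤ X.card ∧ (X + S).card ≤ Nat.card G - k then
    sInf {d : ℕ | ∃ X : Finset G, k ≤ X.card ∧ (X + S).card ≤ Nat.card G - k ∧
      d = (X + S).card - X.card}
  else Nat.card G - 2 * k + 1

/-- `S` is `k`-separable: some `X` has `|X| ≥ k` and `|G \ (X + S)| ≥ k`. -/
def KSeparable {G : Type*} [AddCommGroup G] [DecidableEq G] (k : ℕ) (S : Finset G) : Prop :=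
  ∃ X : Finset G, k ≤ X.card ∧ (X + S).card ≤ Nat.card G - k

/-- `X` is a `k`-fragment of `S`: `|X| ≥ k`, `|G \ (X + S)| ≥ k` and
`|X + S| - |X| = κ_k(S)`. -/
def IsFragment {G : Type*} [AddCommGroup G] [DecidableEq G] (k : ℕ) (S X : Finset G) : Prop :=
  k ≤ X.card ∧ (X + S).card ≤ Nat.card G - k ∧ (X + S).card - X.card = kappa k S

/-- A hyper-atom of `S` is a subgroup of maximal cardinality which is a `1`-fragment. -/
def IsHyperAtom {G : Type*} [AddCommGroup G] [DecidableEq G]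
    (S : Finset G) (H : AddSubgroup G) : Prop :=
  (∃ HF : Finset G, (HF : Set G) = (H : Set G) ∧ IsFragment 1 S HF) ∧
  ∀ (K : AddSubgroup G) (KF : Finset G), (KF : Set G) = (K : Set G) →
    IsFragment 1 S KF → Nat.card K ≤ Nat.card H

/-- A finite set is aperiodic if its period `{g : A + g = A}` is trivial. -/
def IsAperiodic {G : Type*} [AddCommGroup G] [DecidableEq G] (A : Finset G) : Prop :=
  ∀ g : G, A + ({g} : Finset G) = A → g = 0

/-- `A` is `H`-quasi-periodic: there is `x` with `(A \ (x + H)) + H = A \ (x + H)`. -/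
def QuasiPeriodic {G : Type*} [AddCommGroup G] (H A : Set G) : Prop :=
  ∃ x : G, (A \ ({x} + H)) + H = A \ ({x} + H)

/-- `A` is an arithmetic progression with difference `d`. -/
def IsAPWith {G : Type*} [AddCommGroup G] [DecidableEq G] (d : G) (A : Finset G) : Prop :=
  ∃ (a : G) (k : ℕ), A.card = k ∧
    A = (Finset.range k).image (fun i => a + (i : ℕ) • d)

/-!
Let `φ : G → Q = G/H`, and record `S`, `T` and `S + T` by the sizes of their intersections with the
cosets of `H`, three weight functions on `Q` bounded by `|H|`. Since `H` is a fragment of `S`, the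
set `φ(S)` satisfies the Cauchy-Davenport inequality against every subset of `Q`; since `H` is a
largest such subgroup, the inequality improves by one for the nontrivial subgroups of `Q`. Applying
Cauchy-Davenport to the level sets of the weights gives `|φ(S + T)| ≤ |φ(S)| + |φ(T)| - 1`, and the
bound `(2|G| + 2)/3` keeps `φ(S + T)` away from all of `Q`.

If no `d ≠ 0` satisfied `|φ(S) + {0, d}| ≤ |φ(S)| + 1`, then even two cosets would be missed and
`φ(T)` would violate the inequality of Vosper's theorem for `φ(S)`. A smallest set violating it is
Sidon or a coset of a subgroup. Cosets are excluded by the improved inequality, and a Sidon set of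
at least three elements that generates `Q` satisfies Vosper's inequality itself; so a smallest
violation is a pair, whose difference is a valid `d`. Hence `φ(S)` and `φ(T)` are progressions with
difference `d`.

Comparing the weights along the two progressions shows that `S + T` fills every coset it meets
except one at an end of the progression, which is the sum of a single pair of cosets. There `S + T`
is an aperiodic sum of two fibres, so by Kneser's theorem it is too large to allow a second
incomplete coset in `S` or in `T`.

Kneser's theorem is reached by covering `A + B` with subsets `C` such that
`|A| + |B| ≤ |C| + |Stab C|`, which Dyson transforms produce around any point of `A + B`. This lower
bound passes from two sets to their union.
-/

namespace CriticalPair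

open Finset AddAction

section Sumsets

lemma ne_univ_of_card_lt {α : Type*} [Fintype α] {s : Finset α} (h : #s < Fintype.card α) :
    s ≠ univ := by
  rintro rfl
  exact h.ne card_univ

variable {G : Type*} [AddCommGroup G] [DecidableEq G] {A B : Finset G}

lemma mem_add_of_card_lt {U : Finset G} {c : G} (hA : A ⊆ U) (hB : ∀ b ∈ B, c - b ∈ U)
    (h : #U < #A + #B) : c ∈ A + B := by
  rw [← card_image_of_injective B (sub_right_injective (b := c))] at h
  obtain ⟨a, ha⟩ := inter_nonempty_of_card_lt_card_add_card hA (image_subset_iff.2 hB) h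
  obtain ⟨haA, b, hb, rfl⟩ : a ∈ A ∧ ∃ b ∈ B, c - b = a := by simpa using ha
  exact mem_add.2 ⟨c - b, haA, b, hb, sub_add_cancel c b⟩

lemma add_eq_univ_of_card_lt [Fintype G] (h : Fintype.card G < #A + #B) : A + B = univ :=
  eq_univ_of_forall fun _ =>
    mem_add_of_card_lt (subset_univ A) (fun _ _ => mem_univ _) (by rwa [card_univ])

lemma add_univ_of_nonempty [Fintype G] (hA : A.Nonempty) : A + univ = univ :=
  add_eq_univ_of_card_lt (by have := hA.card_pos; rw [card_univ]; omega)

end Sumsets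

section Subgroups

variable {G : Type*} [AddCommGroup G] [Fintype G]

/-- The elements of a subgroup of a finite group, as a finset. -/
noncomputable def elems (K : AddSubgroup G) : Finset G := univ.filter (· ∈ K)

@[simp] lemma mem_elems {K : AddSubgroup G} {g : G} : g ∈ elems K ↔ g ∈ K := by simp [elems]

@[simp] lemma coe_elems (K : AddSubgroup G) : (elems K : Set G) = K := by ext; simp

lemma elems_nonempty (K : AddSubgroup G) : (elems K).Nonempty := ⟨0, by simp⟩

lemma card_elems_pos (K : AddSubgroup G) : 0 < #(elems K) := (elems_nonempty K).card_pos

lemma natCard_eq_card_elems (K : AddSubgroup G) : Nat.card K = #(elems K) :=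
  Nat.subtype_card (elems K) (by simp)

lemma card_elems_le {K L : AddSubgroup G} (h : K ≤ L) : #(elems K) ≤ #(elems L) :=
  card_le_card fun _ hg => mem_elems.2 (h (mem_elems.1 hg))

@[simp] lemma elems_bot : elems (⊥ : AddSubgroup G) = {0} := by ext; simp

lemma two_le_card_elems {K : AddSubgroup G} (hK : K ≠ ⊥) : 2 ≤ #(elems K) := by
  obtain ⟨g, hg, hg0⟩ := (AddSubgroup.bot_or_exists_ne_zero K).resolve_left hK
  exact one_lt_card.2 ⟨g, by simpa, 0, by simp, hg0⟩

lemma two_mul_card_elems_le {K : AddSubgroup G} (hK : K ≠ ⊤) :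
    2 * #(elems K) ≤ Fintype.card G := by
  rw [← natCard_eq_card_elems, ← Nat.card_eq_fintype_card, ← K.index_mul_card]
  exact Nat.mul_le_mul_right _ (K.one_lt_index_of_ne_top hK)

variable [DecidableEq G]

lemma elems_add_elems (K : AddSubgroup G) : elems K + elems K = elems K := by
  rw [← coe_inj, coe_add, coe_elems, coe_add_coe]

lemma add_elems_stabilizer (C : Finset G) : C + elems (stabilizer G C) = C := by
  rw [← coe_inj, coe_add, coe_elems, ← stabilizer_coe_finset, add_stabilizer_self]

lemma le_stabilizer_elems (K : AddSubgroup G) : K ≤ stabilizer G (elems K) := fun k hk =>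
  mem_stabilizer_finset.2 fun y => by simpa using K.add_mem_cancel_left hk

lemma le_stabilizer_add_elems (K : AddSubgroup G) (U : Finset G) :
    K ≤ stabilizer G (U + elems K) := fun k hk => by
  have hk' : k +ᵥ elems K = elems K := le_stabilizer_elems K hk
  rw [mem_stabilizer_iff, add_comm, ← vadd_add_assoc, hk']

lemma card_elems_le_of_le_stabilizer {K : AddSubgroup G} {U : Finset G}
    (hK : K ≤ stabilizer G U) (hU : U.Nonempty) : #(elems K) ≤ #U := by
  obtain ⟨x, hx⟩ := hU
  refine card_le_card_of_injOn (· + x) (fun k hk => ?_) (add_left_injective x).injOn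
  exact (mem_stabilizer_finset.1 (hK (mem_elems.1 hk)) x).2 hx

end Subgroups

/-! ### Kneser's theorem -/

section Kneser

variable {G : Type*} [AddCommGroup G] [DecidableEq G]

lemma stabilizer_vadd_finset (x : G) (C : Finset G) : stabilizer G (x +ᵥ C) = stabilizer G C := by
  ext g
  rw [mem_stabilizer_iff, mem_stabilizer_iff, vadd_comm, vadd_left_cancel_iff]

lemma le_stabilizer_inter {K : AddSubgroup G} {U V : Finset G} (hU : K ≤ stabilizer G U)
    (hV : K ≤ stabilizer G V) : K ≤ stabilizer G (U ∩ V) := fun k hk => by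
  rw [mem_stabilizer_iff, vadd_finset_inter, hU hk, hV hk]

lemma le_stabilizer_sdiff {K : AddSubgroup G} {U V : Finset G} (hU : K ≤ stabilizer G U)
    (hV : K ≤ stabilizer G V) : K ≤ stabilizer G (U \ V) := fun k hk => by
  rw [mem_stabilizer_iff, vadd_finset_sdiff, hU hk, hV hk]

lemma le_stabilizer_union {K : AddSubgroup G} {U V : Finset G} (hU : K ≤ stabilizer G U)
    (hV : K ≤ stabilizer G V) : K ≤ stabilizer G (U ∪ V) := fun k hk => by
  rw [mem_stabilizer_iff, vadd_finset_union, hU hk, hV hk]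

variable [Fintype G]

lemma card_mul_card_le_card_inf_mul_card_add {H₁ H₂ : AddSubgroup G} {P Q : Finset G}
    (hP : P ⊆ elems H₁) (hQ : Q ⊆ elems H₂) : #P * #Q ≤ #(elems (H₁ ⊓ H₂)) * #(P + Q) := by
  rw [← card_product]
  refine card_le_mul_card_image_of_maps_to (f := fun p : G × G => p.1 + p.2)
    (fun p hp => add_mem_add (mem_product.1 hp).1 (mem_product.1 hp).2) _ fun d _ => ?_
  obtain hne | ⟨p₀, hp₀⟩ := ((P ×ˢ Q).filter fun p => p.1 + p.2 = d).eq_empty_or_nonempty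
  · simp [hne]
  simp only [mem_filter, mem_product] at hp₀
  refine card_le_card_of_injOn (fun p => p.1 - p₀.1) (fun p hp => ?_) fun p hp p' hp' h => ?_
  · simp only [coe_filter, mem_product, Set.mem_ofPred_eq] at hp
    have hsub : p.1 - p₀.1 = p₀.2 - p.2 := by
      rw [sub_eq_sub_iff_add_eq_add, hp.2, add_comm, hp₀.2]
    refine mem_elems.2 ⟨H₁.sub_mem (mem_elems.1 (hP hp.1.1)) (mem_elems.1 (hP hp₀.1.1)), ?_⟩
    simp only [hsub]
    exact H₂.sub_mem (mem_elems.1 (hQ hp₀.1.2)) (mem_elems.1 (hQ hp.1.2))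
  · simp only [coe_filter, mem_product, Set.mem_ofPred_eq] at hp hp'
    have h₁ : p.1 = p'.1 := sub_left_injective h
    exact Prod.ext h₁ (add_left_cancel (h₁ ▸ hp.2.trans hp'.2.symm))

-- Here `p` and `p'` count the elements of a subgroup `H₁` inside and outside `C₂`, `w` and `w'`
-- those of `H₂` inside and outside `C₁`, and `n = |H₁ ⊓ H₂|`. Were the conclusion false, `p * p'`
-- and `w * w'` would be too large for the product of `p * w'` and `p' * w`.
lemma add_le_or_add_le_of_grid {n p p' w w' a b : ℕ} (hn : 0 < n) (hp : n ≤ p) (hw' : n ≤ w')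
    (hp' : p' = 0 ∨ n ≤ p') (hw : w = 0 ∨ n ≤ w) (ha : p * w' ≤ n * a) (hb : p' * w ≤ n * b) :
    p + p' ≤ a + n ∨ w + w' ≤ b + n ∨ w + w' ≤ a := by
  obtain rfl | hp' := hp'
  · have : p ≤ a := Nat.le_of_mul_le_mul_left (by nlinarith) hn
    omega
  obtain rfl | hw := hw
  · have : w' ≤ a := Nat.le_of_mul_le_mul_left (by nlinarith) hn
    omega
  by_contra! hcon
  have merge {u v : ℕ} (hu : n ≤ u) (hv : n ≤ v) : n * (u + v) ≤ u * v + n * n := by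
    obtain ⟨u, rfl⟩ := Nat.exists_eq_add_of_le hu
    obtain ⟨v, rfl⟩ := Nat.exists_eq_add_of_le hv
    nlinarith
  have hP : n * (a + 1) ≤ p * p' := by nlinarith [merge hp hp']
  have hW : n * (b + 1) ≤ w * w' := by nlinarith [merge hw hw']
  have hprod := (Nat.mul_le_mul hP hW).trans_eq (by ring : _ = p * w' * (p' * w))
  have hlt : n * a * (n * b) < n * (a + 1) * (n * (b + 1)) :=
    Nat.mul_lt_mul'' (by nlinarith) (by nlinarith)
  exact (hprod.trans (Nat.mul_le_mul ha hb)).not_gt hlt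

lemma elems_inter_add_elems_sdiff_subset {C₁ C₂ : Finset G} {H₁ H₂ : AddSubgroup G}
    (h₁ : H₁ ≤ stabilizer G C₁) (h₂ : H₂ ≤ stabilizer G C₂) :
    elems H₁ ∩ C₂ + elems H₂ \ C₁ ⊆ C₂ \ C₁ := by
  intro g hg
  obtain ⟨y, hy, z, hz, rfl⟩ := mem_add.1 hg
  rw [mem_inter, mem_elems] at hy
  rw [mem_sdiff, mem_elems] at hz
  refine mem_sdiff.2 ⟨?_, fun hC => hz.2 ((mem_stabilizer_finset.1 (h₁ hy.1) z).1 hC)⟩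
  rw [add_comm]
  exact (mem_stabilizer_finset.1 (h₂ hz.1) y).2 hy.2

lemma card_elems_le_card_sdiff_of_zero_mem {C₁ C₂ : Finset G} {H₁ H₂ : AddSubgroup G}
    (h₁ : H₁ ≤ stabilizer G C₁) (h₂ : H₂ ≤ stabilizer G C₂) (h0₂ : 0 ∈ C₂) (h0₁ : 0 ∉ C₁) :
    #(elems H₁) ≤ #(C₂ \ C₁) + #(elems (H₁ ⊓ H₂)) ∨
      #(elems H₂) ≤ #(C₁ \ C₂) + #(elems (H₁ ⊓ H₂)) ∨ #(elems H₂) ≤ #(C₂ \ C₁) := by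
  have stabC₁ := (inf_le_left (b := H₂)).trans h₁
  have stabC₂ := (inf_le_right (a := H₁)).trans h₂
  have stabH₁ := (inf_le_left (b := H₂)).trans (le_stabilizer_elems H₁)
  have stabH₂ := (inf_le_right (a := H₁)).trans (le_stabilizer_elems H₂)
  have small {P : Finset G} (hP : H₁ ⊓ H₂ ≤ stabilizer G P) :
      #P = 0 ∨ #(elems (H₁ ⊓ H₂)) ≤ #P :=
    P.eq_empty_or_nonempty.imp card_eq_zero.2 (card_elems_le_of_le_stabilizer hP)
  have hP : (elems H₁ ∩ C₂).Nonempty := ⟨0, by simp [h0₂]⟩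
  have hW' : (elems H₂ \ C₁).Nonempty := ⟨0, by simp [h0₁]⟩
  have grid₁ := (card_mul_card_le_card_inf_mul_card_add (H₁ := H₁) (H₂ := H₂)
    (inter_subset_left (s₂ := C₂)) (sdiff_subset (t := C₁))).trans
    (Nat.mul_le_mul_left _ (card_le_card (elems_inter_add_elems_sdiff_subset h₁ h₂)))
  have grid₂ := (card_mul_card_le_card_inf_mul_card_add (H₁ := H₂) (H₂ := H₁)
    (inter_subset_left (s₂ := C₁)) (sdiff_subset (t := C₂))).trans
    (Nat.mul_le_mul_left _ (card_le_card (elems_inter_add_elems_sdiff_subset h₂ h₁)))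
  rw [inf_comm, mul_comm #(_ ∩ _)] at grid₂
  rw [← card_inter_add_card_sdiff (elems H₁) C₂, ← card_inter_add_card_sdiff (elems H₂) C₁]
  exact add_le_or_add_le_of_grid (card_elems_pos _)
    (card_elems_le_of_le_stabilizer (le_stabilizer_inter stabH₁ stabC₂) hP)
    (card_elems_le_of_le_stabilizer (le_stabilizer_sdiff stabH₂ stabC₁) hW')
    (small (le_stabilizer_sdiff stabH₁ stabC₂)) (small (le_stabilizer_inter stabH₂ stabC₁))
    grid₁ grid₂

lemma card_elems_le_card_sdiff {C₁ C₂ : Finset G} (h : ¬C₂ ⊆ C₁) :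
    #(elems (stabilizer G C₁)) ≤ #(C₂ \ C₁) + #(elems (stabilizer G C₁ ⊓ stabilizer G C₂)) ∨
      #(elems (stabilizer G C₂)) ≤ #(C₁ \ C₂) + #(elems (stabilizer G C₁ ⊓ stabilizer G C₂)) ∨
      #(elems (stabilizer G C₂)) ≤ #(C₂ \ C₁) := by
  obtain ⟨x, hx₂, hx₁⟩ := not_subset.1 h
  have hmem (C : Finset G) : 0 ∈ -x +ᵥ C ↔ x ∈ C := by
    rw [mem_neg_vadd_finset_iff, vadd_eq_add, add_zero]
  have := card_elems_le_card_sdiff_of_zero_mem (C₁ := -x +ᵥ C₁) (C₂ := -x +ᵥ C₂)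
    (stabilizer_vadd_finset _ _).ge (stabilizer_vadd_finset _ _).ge ((hmem _).2 hx₂)
    (mt (hmem _).1 hx₁)
  simpa only [← vadd_finset_sdiff, card_vadd_finset] using this

lemma le_card_union_add_card_stabilizer {C₁ C₂ : Finset G} {n : ℕ}
    (h₁ : n ≤ #C₁ + #(elems (stabilizer G C₁))) (h₂ : n ≤ #C₂ + #(elems (stabilizer G C₂))) :
    n ≤ #(C₁ ∪ C₂) + #(elems (stabilizer G (C₁ ∪ C₂))) := by
  by_cases c₁ : C₁ ⊆ C₂
  · rwa [union_eq_right.2 c₁]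
  by_cases c₂ : C₂ ⊆ C₁
  · rwa [union_eq_left.2 c₂]
  have hinf := card_elems_le (le_stabilizer_union (inf_le_left (b := stabilizer G C₂))
    (inf_le_right (a := stabilizer G C₁)))
  have half₁ := card_elems_le_card_sdiff c₂
  have half₂ := card_elems_le_card_sdiff c₁
  rw [inf_comm] at half₂
  have card₁ : #C₁ + #(C₂ \ C₁) = #(C₁ ∪ C₂) := by rw [add_comm, card_sdiff_add_card, union_comm]
  have card₂ : #C₂ + #(C₁ \ C₂) = #(C₁ ∪ C₂) := by rw [add_comm, card_sdiff_add_card]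
  omega

lemma exists_subset_add_card_stabilizer {A B : Finset G} {a b : G} (ha : a ∈ A) (hb : b ∈ B) :
    ∃ C ⊆ A + B, a + b ∈ C ∧ #A + #B ≤ #C + #(elems (stabilizer G C)) := by
  induction hn : #B using Nat.strong_induction_on generalizing A B with
  | _ n ih =>
  subst hn
  by_cases h : ∀ a' ∈ A, ∀ b' ∈ B, a' + b' - b ∈ A
  · refine ⟨b +ᵥ A, ?_, by simpa [add_comm a] using vadd_mem_vadd_finset (a := b) ha, ?_⟩
    · rw [add_comm]
      exact vadd_finset_subset_add hb
    rw [card_vadd_finset, stabilizer_vadd_finset, add_le_add_iff_left, ← card_vadd_finset (-b) B]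
    refine card_le_card fun g hg => ?_
    obtain ⟨b', hb', rfl⟩ := mem_vadd_finset.1 hg
    refine mem_elems.2 (mem_stabilizer_finset'.2 fun a' ha' => ?_)
    convert h a' ha' b' hb' using 1
    simp only [vadd_eq_add]
    abel
  · push Not at h
    obtain ⟨a', ha', b', hb', hab⟩ := h
    set X := addDysonETransform (a' - b) (A, B)
    have hmem {y : G} : y ∈ X.2 ↔ y ∈ B ∧ a' - b + y ∈ A := by
      rw [addDysonETransform_snd, mem_inter, mem_neg_vadd_finset_iff, vadd_eq_add]
    have hlt : #X.2 < #B := by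
      refine card_lt_card ⟨inter_subset_left, fun hsub => hab ?_⟩
      convert (hmem.1 (hsub hb')).2 using 1
      abel
    obtain ⟨C, hC, hab', hcard⟩ := ih _ hlt (mem_union_left _ ha) (hmem.2 ⟨hb, by simpa⟩) rfl
    exact ⟨C, hC.trans (addDysonETransform.subset _ _), hab',
      (addDysonETransform.card _ (A, B)).symm.trans_le hcard⟩

lemma card_add_card_le_card_add_add_card_stabilizer {A B : Finset G} (hA : A.Nonempty)
    (hB : B.Nonempty) : #A + #B ≤ #(A + B) + #(elems (stabilizer G (A + B))) := by
  choose! f hf using fun (p : G × G) (hp : p ∈ A ×ˢ B) =>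
    exists_subset_add_card_stabilizer (mem_product.1 hp).1 (mem_product.1 hp).2
  have hunion : (A ×ˢ B).biUnion f = A + B := by
    refine (biUnion_subset.2 fun p hp => (hf p hp).1).antisymm fun z hz => ?_
    obtain ⟨a, ha, b, hb, rfl⟩ := mem_add.1 hz
    exact mem_biUnion.2 ⟨(a, b), mk_mem_product ha hb, (hf _ (mk_mem_product ha hb)).2.1⟩
  suffices ∀ I ⊆ A ×ˢ B, I.Nonempty →
      #A + #B ≤ #(I.biUnion f) + #(elems (stabilizer G (I.biUnion f))) by
    simpa only [hunion] using this _ Subset.rfl (hA.product hB)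
  intro I hsub hI
  induction hI using Finset.Nonempty.cons_induction with
  | singleton p => simpa using (hf p (hsub (mem_singleton_self p))).2.2
  | cons p I _ _ ih =>
    rw [cons_eq_insert] at hsub ⊢
    rw [biUnion_insert]
    exact le_card_union_add_card_stabilizer (hf p (hsub (mem_insert_self _ _))).2.2
      (ih ((subset_insert _ _).trans hsub))

theorem kneser {A B : Finset G} (hA : A.Nonempty) (hB : B.Nonempty) :
    #(A + elems (stabilizer G (A + B))) + #(B + elems (stabilizer G (A + B))) ≤
      #(A + B) + #(elems (stabilizer G (A + B))) := by
  have hsum : A + elems (stabilizer G (A + B)) + (B + elems (stabilizer G (A + B))) = A + B := by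
    rw [add_add_add_comm, elems_add_elems, add_elems_stabilizer]
  simpa only [hsum] using card_add_card_le_card_add_add_card_stabilizer
    (hA.add (elems_nonempty (stabilizer G (A + B))))
    (hB.add (elems_nonempty (stabilizer G (A + B))))

end Kneser

/-! ### Arithmetic progressions -/

section Progressions

variable {Q : Type*} [AddCommGroup Q] {A B : Finset Q} {d : Q}

lemma exists_nsmul_exit [Finite Q] {b c : Q} (hb : b ∈ A) (hc : c ∉ A)
    (hbc : c - b ∈ AddSubgroup.zmultiples d) :
    ∃ n : ℕ, (∀ i ≤ n, b + i • d ∈ A) ∧ b + (n + 1) • d ∉ A := by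
  obtain ⟨m, hm⟩ := mem_multiples_iff_mem_zmultiples.2 hbc
  have hex : ∃ m : ℕ, b + m • d ∉ A := ⟨m, by simpa [show m • d = c - b from hm] using hc⟩
  obtain ⟨n, hn⟩ := Nat.exists_eq_add_one_of_ne_zero
    (fun h0 => Nat.find_spec hex (by rw [h0]; simpa) : Nat.find hex ≠ 0)
  exact ⟨n, fun i hi => not_not.1 (Nat.find_min hex (by omega)), hn ▸ Nat.find_spec hex⟩

variable [DecidableEq Q]

lemma add_pair_eq_union (A : Finset Q) (d : Q) : A + {0, d} = A ∪ (d +ᵥ A) := by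
  rw [insert_eq, add_union, singleton_zero, add_zero, add_comm, singleton_add]

lemma card_sdiff_vadd_add_card (A : Finset Q) (d : Q) : #(A \ (d +ᵥ A)) + #A = #(A + {0, d}) := by
  rw [add_pair_eq_union, ← card_sdiff_add_card, card_vadd_finset]

lemma card_vadd_sdiff_add_card (A : Finset Q) (d : Q) : #((d +ᵥ A) \ A) + #A = #(A + {0, d}) := by
  rw [add_pair_eq_union, union_comm, ← card_sdiff_add_card]

lemma eq_of_card_add_pair_le_of_add_notMem (h : #(A + {0, d}) ≤ #A + 1) {a b : Q} (ha : a ∈ A)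
    (hb : b ∈ A) (had : a + d ∉ A) (hbd : b + d ∉ A) : a = b := by
  have hcard : #((d +ᵥ A) \ A) ≤ 1 := by have := card_vadd_sdiff_add_card A d; omega
  have mem {c : Q} (hc : c ∈ A) (hcd : c + d ∉ A) : c + d ∈ (d +ᵥ A) \ A :=
    mem_sdiff.2 ⟨mem_vadd_finset.2 ⟨c, hc, add_comm d c⟩, hcd⟩
  exact add_right_cancel (card_le_one.1 hcard _ (mem ha had) _ (mem hb hbd))

lemma eq_of_card_add_pair_le_of_sub_notMem (h : #(A + {0, d}) ≤ #A + 1) {a b : Q} (ha : a ∈ A)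
    (hb : b ∈ A) (had : a - d ∉ A) (hbd : b - d ∉ A) : a = b := by
  have hcard : #(A \ (d +ᵥ A)) ≤ 1 := by have := card_sdiff_vadd_add_card A d; omega
  have mem {c : Q} (hc : c ∈ A) (hcd : c - d ∉ A) : c ∈ A \ (d +ᵥ A) := by
    refine mem_sdiff.2 ⟨hc, fun hcA => hcd ?_⟩
    obtain ⟨y, hy, rfl⟩ := mem_vadd_finset.1 hcA
    simpa using hy
  exact card_le_one.1 hcard _ (mem ha had) _ (mem hb hbd)

/-- The progression `a, a + d, …, a + (k - 1) • d`. -/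
def progression (a d : Q) (k : ℕ) : Finset Q := (range k).image fun i => a + i • d

lemma progression_one (a d : Q) : progression a d 1 = {a} := by simp [progression]

lemma progression_succ (a d : Q) {k : ℕ} (hk : k ≠ 0) :
    progression a d (k + 1) = progression a d k + {0, d} := by
  have shift : d +ᵥ progression a d k = (range k).image fun i => a + (i + 1) • d := by
    ext z
    simp [progression, mem_vadd_finset, succ_nsmul, add_comm, add_left_comm]
  rw [add_pair_eq_union, shift]
  ext z
  simp only [progression, mem_image, mem_union, mem_range]
  constructor
  · rintro ⟨i, hi, rfl⟩
    cases i with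
    | zero => exact Or.inl ⟨0, by omega, rfl⟩
    | succ i => exact Or.inr ⟨i, by omega, rfl⟩
  · rintro (⟨i, hi, rfl⟩ | ⟨i, hi, rfl⟩)
    · exact ⟨i, by omega, rfl⟩
    · exact ⟨i + 1, by omega, rfl⟩

variable [Fintype Q]

lemma isAPWith_of_card_add_pair_le (hd : AddSubgroup.zmultiples d = ⊤) (hA : A.Nonempty)
    (hU : A ≠ univ) (h : #(A + {0, d}) ≤ #A + 1) : IsAPWith d A := by
  obtain ⟨c, hc⟩ : ∃ c, c ∉ A := by simpa [eq_univ_iff_forall] using hU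
  have walk {b : Q} (hb : b ∈ A) :
      ∃ n : ℕ, (∀ i ≤ n, b - i • d ∈ A) ∧ b - (n + 1) • d ∉ A := by
    simpa [← sub_eq_add_neg] using exists_nsmul_exit (d := -d) hb hc (by simp [hd])
  obtain ⟨e, he, hed⟩ : ∃ e ∈ A, e - d ∉ A := by
    obtain ⟨b, hb⟩ := hA
    obtain ⟨n, hn, hn'⟩ := walk hb
    exact ⟨b - n • d, hn n le_rfl, by rwa [sub_sub, ← succ_nsmul]⟩
  have hlast : e + (addOrderOf d - 1) • d ∉ A := by
    rwa [sub_nsmul d (addOrderOf_pos d), addOrderOf_nsmul_eq_zero, zero_add, one_nsmul,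
      ← sub_eq_add_neg]
  have hex : ∃ k : ℕ, e + k • d ∉ A := ⟨_, hlast⟩
  have hmem {i : ℕ} (hi : i < Nat.find hex) : e + i • d ∈ A := not_not.1 (Nat.find_min hex hi)
  have hinj : Set.InjOn (fun i : ℕ => e + i • d) (range (Nat.find hex)) := fun i hi j hj hij => by
    have hle : Nat.find hex ≤ addOrderOf d - 1 := Nat.find_min' hex hlast
    rw [mem_coe, mem_range] at hi hj
    exact nsmul_injOn_Iio_addOrderOf (by grind) (by grind) (add_left_cancel hij)
  have hA_eq : A = (range (Nat.find hex)).image fun i => e + i • d := by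
    refine Subset.antisymm (fun a ha => ?_) (image_subset_iff.2 fun i hi => hmem (mem_range.1 hi))
    obtain ⟨n, hn, hn'⟩ := walk ha
    have hae : a - n • d = e := eq_of_card_add_pair_le_of_sub_notMem h (hn n le_rfl) he
      (by rwa [sub_sub, ← succ_nsmul]) hed
    refine mem_image.2 ⟨n, mem_range.2 ((Nat.lt_find_iff hex n).2 fun i hi => not_not.2 ?_),
      by rw [← hae, sub_add_cancel]⟩
    have hstep : a - (n - i) • d = e + i • d := by rw [← hae, sub_nsmul d hi]; abel
    exact hstep ▸ hn (n - i) (Nat.sub_le n i)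
  exact ⟨e, _, (congrArg card hA_eq).trans (by rw [card_image_of_injOn hinj, card_range]), hA_eq⟩

lemma card_lt_card_add_pair (hd : AddSubgroup.zmultiples d = ⊤) (hA : A.Nonempty) (hU : A ≠ univ) :
    #A < #(A + {0, d}) := by
  obtain ⟨b, hb⟩ := hA
  obtain ⟨c, hc⟩ : ∃ c, c ∉ A := by simpa [eq_univ_iff_forall] using hU
  obtain ⟨n, hn, hn'⟩ := exists_nsmul_exit (d := d) hb hc (by simp [hd])
  have hexit : b + (n + 1) • d ∈ (d +ᵥ A) \ A :=
    mem_sdiff.2 ⟨mem_vadd_finset.2 ⟨_, hn n le_rfl, by simp [succ_nsmul]; abel⟩, hn'⟩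
  have := card_vadd_sdiff_add_card A d
  have := card_pos.2 ⟨_, hexit⟩
  omega

lemma card_add_le_card_add_progression (hd : AddSubgroup.zmultiples d = ⊤) (hB : B.Nonempty)
    (hpair : #B + 2 ≤ #(B + {0, d})) (a : Q) {k : ℕ} (hk : 2 ≤ k)
    (hU : B + progression a d k ≠ univ) : #B + k ≤ #(B + progression a d k) := by
  induction k, hk using Nat.le_induction with
  | base =>
    rwa [progression_succ a d one_ne_zero, progression_one, add_left_comm, singleton_add,
      card_vadd_finset]
  | succ k hk ih =>
    have hsucc : B + progression a d (k + 1) = B + progression a d k + {0, d} := by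
      rw [progression_succ a d (by lia), add_assoc]
    rw [hsucc] at hU ⊢
    have hne : (progression a d k).Nonempty := by simp [progression]; omega
    have hU' : B + progression a d k ≠ univ := fun h => hU <| by
      rw [h]
      exact univ_add_of_zero_mem (mem_insert_self _ _)
    have := card_lt_card_add_pair hd (hB.add hne) hU'
    have := ih hU'
    omega

lemma isAPWith_of_card_add_add_one_le (hA : IsAPWith d A) (hA₂ : 2 ≤ #A)
    (hd : AddSubgroup.zmultiples d = ⊤) (hB : B.Nonempty) (hU : A + B ≠ univ)
    (h : #(A + B) + 1 ≤ #A + #B) : IsAPWith d B := by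
  obtain ⟨a, k, hk, rfl⟩ := hA
  have hBU : B ≠ univ := by
    rintro rfl
    exact hU (add_univ_of_nonempty (card_pos.1 (by omega)))
  refine isAPWith_of_card_add_pair_le hd hB hBU ?_
  by_contra! hcon
  rw [add_comm _ B] at hU h
  have hexpand := card_add_le_card_add_progression hd hB hcon a (hk ▸ hA₂) hU
  rw [progression] at hexpand
  omega

end Progressions

/-! ### A Vosper type theorem -/

section Sidon

variable {Q : Type*} [AddCommGroup Q] [DecidableEq Q] {X : Finset Q}

/-- A set is *Sidon* if it meets each of its nontrivial translates in at most one point. -/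
def IsSidon (X : Finset Q) : Prop := ∀ x : Q, x ≠ 0 → #(X ∩ (x +ᵥ X)) ≤ 1

lemma card_inter_vadd (X : Finset Q) (a b : Q) :
    #((a +ᵥ X) ∩ (b +ᵥ X)) = #(X ∩ ((b - a) +ᵥ X)) := by
  rw [← card_vadd_finset a (X ∩ _), vadd_finset_inter, vadd_vadd, add_sub_cancel]

lemma IsSidon.card_inter_le (h : IsSidon X) {a b : Q} (hab : a ≠ b) :
    #((a +ᵥ X) ∩ (b +ᵥ X)) ≤ 1 := by
  rw [card_inter_vadd]
  exact h _ (sub_ne_zero.2 hab.symm)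

lemma IsSidon.vadd (h : IsSidon X) (x : Q) : IsSidon (x +ᵥ X) := fun y hy => by
  rw [vadd_vadd]
  exact h.card_inter_le (by simpa using hy)

lemma vadd_subset_add {a : Q} {N : Finset Q} (ha : a ∈ N) (X : Finset Q) : a +ᵥ X ⊆ N + X := by
  rw [← singleton_add]
  exact add_subset_add_right (singleton_subset_iff.2 ha)

lemma IsSidon.two_mul_card_le {N : Finset Q} (hX : IsSidon X) (hN : 2 ≤ #N) :
    2 * #X ≤ #(N + X) + 1 := by
  obtain ⟨a, ha, b, hb, hab⟩ := one_lt_card.1 hN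
  have := card_le_card (union_subset (vadd_subset_add ha X) (vadd_subset_add hb X))
  have hunion := card_union_add_card_inter (a +ᵥ X) (b +ᵥ X)
  have := hX.card_inter_le hab
  rw [card_vadd_finset, card_vadd_finset] at hunion
  omega

lemma IsSidon.three_mul_card_le {N : Finset Q} (hX : IsSidon X) (hN : 3 ≤ #N) :
    3 * #X ≤ #(N + X) + 3 := by
  obtain ⟨a, b, c, ha, hb, hc, hab, hac, hbc⟩ := two_lt_card_iff.1 hN
  have := card_le_card (union_subset (union_subset (vadd_subset_add ha X) (vadd_subset_add hb X))
    (vadd_subset_add hc X))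
  have hunion := card_union_add_card_inter (a +ᵥ X) (b +ᵥ X)
  have hunion' := card_union_add_card_inter ((a +ᵥ X) ∪ (b +ᵥ X)) (c +ᵥ X)
  have hinter := card_union_le ((a +ᵥ X) ∩ (c +ᵥ X)) ((b +ᵥ X) ∩ (c +ᵥ X))
  have := hX.card_inter_le hab
  have := hX.card_inter_le hac
  have := hX.card_inter_le hbc
  rw [← union_inter_distrib_right] at hinter
  simp only [card_vadd_finset] at hunion hunion'
  omega

end Sidon

section Vosper

variable {Q : Type*} [AddCommGroup Q] [Fintype Q] [DecidableEq Q]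
  {A X Y Z : Finset Q} {K : AddSubgroup Q}

/-- A *Cauchy subset*, in Hamidoune's terminology: the Cauchy-Davenport inequality holds for its
sum with any nonempty set, unless that sum is the whole group. -/
def IsCauchySet (A : Finset Q) : Prop :=
  ∀ Z : Finset Q, Z.Nonempty → Z + A ≠ univ → #Z + #A ≤ #(Z + A) + 1

/-- The sum of `A` with a nontrivial subgroup is larger than the Cauchy-Davenport bound, unless it
is the whole group. -/
def ExpandsSubgroups (A : Finset Q) : Prop :=
  ∀ K : AddSubgroup Q, K ≠ ⊥ → elems K + A ≠ univ → #(elems K) + #A ≤ #(elems K + A)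

lemma card_zmultiples_add_lt {x : Q} (h : #(A + {0, x}) ≤ #A + 1) :
    #(elems (AddSubgroup.zmultiples x) + A) < #(elems (AddSubgroup.zmultiples x)) + #A := by
  set L := AddSubgroup.zmultiples x
  have exit {a l : Q} (ha : a ∈ A) (hl : l ∈ L) (hla : l + a ∉ A) :
      ∃ f ∈ A, f + x ∉ A ∧ f - a ∈ L := by
    obtain ⟨n, hn, hn'⟩ := exists_nsmul_exit (d := x) ha hla (by simpa)
    exact ⟨a + n • x, hn n le_rfl, by rwa [add_assoc, ← succ_nsmul], by simp [L]⟩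
  by_cases hf : ∃ f ∈ A, f + x ∉ A
  · obtain ⟨f, hfA, hfx⟩ := hf
    have hsub : elems L + A ⊆ A ∪ (f +ᵥ elems L) := by
      refine add_subset_iff.2 fun l hl a ha => ?_
      by_cases hla : l + a ∈ A
      · exact mem_union_left _ hla
      obtain ⟨f', hf', hfx', hL⟩ := exit ha (mem_elems.1 hl) hla
      obtain rfl := eq_of_card_add_pair_le_of_add_notMem h hf' hfA hfx' hfx
      refine mem_union_right _ (mem_vadd_finset.2 ⟨l + a - f', mem_elems.2 ?_, by simp⟩)
      rw [add_sub_assoc, ← neg_sub f' a]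
      exact L.add_mem (mem_elems.1 hl) (L.neg_mem hL)
    have hinter : 0 < #(A ∩ (f +ᵥ elems L)) :=
      card_pos.2 ⟨f, mem_inter.2 ⟨hfA, mem_vadd_finset.2 ⟨0, by simp, by simp⟩⟩⟩
    have := card_le_card hsub
    have := card_union_add_card_inter A (f +ᵥ elems L)
    have := card_vadd_finset f (elems L)
    omega
  · push Not at hf
    have hsub : elems L + A ⊆ A := add_subset_iff.2 fun l hl a ha => by
      by_contra hla
      obtain ⟨f, hfA, hfx, -⟩ := exit ha (mem_elems.1 hl) hla
      exact hfx (hf f hfA)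
    have := card_le_card hsub
    have := card_elems_pos L
    omega

lemma ExpandsSubgroups.eq_top_of_card_lt (hA : ExpandsSubgroups A) (hq : 2 * #A ≤ Fintype.card Q)
    (hK : K ≠ ⊥) (h : #(elems K + A) < #(elems K) + #A) : K = ⊤ := by
  by_contra hKtop
  have := two_mul_card_elems_le hKtop
  have := hA K hK (ne_univ_of_card_lt (by omega))
  omega

lemma ExpandsSubgroups.zmultiples_eq_top {x : Q} (hA : ExpandsSubgroups A)
    (hq : 2 * #A ≤ Fintype.card Q) (hx : x ≠ 0) (h : #(A + {0, x}) ≤ #A + 1) :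
    AddSubgroup.zmultiples x = ⊤ :=
  hA.eq_top_of_card_lt hq (by simpa) (card_zmultiples_add_lt h)

/-- `Z` is *critical* for `Y`: the pair violates the inequality `|Z| + |Y| ≤ |Z + Y|` of Vosper's
theorem, although `Z` and the complement of `Z + Y` both have at least two elements. -/
def IsCritical (Y Z : Finset Q) : Prop :=
  2 ≤ #Z ∧ #(Z + Y) + 1 ≤ #Z + #Y ∧ #(Z + Y) + 2 ≤ Fintype.card Q

lemma IsCritical.vadd (h : IsCritical Y Z) (x : Q) : IsCritical Y (x +ᵥ Z) := by
  simpa only [IsCritical, vadd_add_assoc, card_vadd_finset] using h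

lemma IsCritical.add_ne_univ (h : IsCritical Y Z) : Z + Y ≠ univ :=
  ne_univ_of_card_lt (by have := h.2.2; omega)

lemma IsCritical.symm (h : IsCritical Y Z) (hY : 2 ≤ #Y) : IsCritical Z Y := by
  obtain ⟨-, h₁, h₂⟩ := h
  rw [add_comm Z Y] at h₁ h₂
  exact ⟨hY, by omega, h₂⟩

lemma IsCritical.neg_compl (h : IsCritical Y Z) : IsCritical Y (-(Z + Y)ᶜ) := by
  obtain ⟨h₁, h₂, h₃⟩ := h
  have hsub : -(Z + Y)ᶜ + Y ⊆ -Zᶜ := by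
    refine add_subset_iff.2 fun w hw y hy => ?_
    rw [mem_neg', mem_compl] at hw ⊢
    exact fun hz => hw (by simpa using add_mem_add hz hy)
  have := card_le_card hsub
  have := card_add_card_compl (Z + Y)
  have := card_add_card_compl Z
  simp only [card_neg] at *
  exact ⟨by simp only [card_neg]; omega, by simp only [card_neg]; omega, by omega⟩

lemma exists_min_isCritical (h : IsCritical Y Z) :
    ∃ M, IsCritical Y M ∧ ∀ M', IsCritical Y M' → #M ≤ #M' := by
  obtain ⟨M, hM, hmin⟩ := exists_min_image {M | IsCritical Y M} card ⟨Z, by simpa⟩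
  exact ⟨M, by simpa using hM, fun M' hM' => hmin M' (by simpa)⟩

lemma card_inter_vadd_le_one_or_mem_stabilizer (hY : IsCauchySet Y) (h : IsCritical Y Z)
    (hmin : ∀ M, IsCritical Y M → #Z ≤ #M) (x : Q) :
    #(Z ∩ (x +ᵥ Z)) ≤ 1 ∨ x ∈ stabilizer Q Z := by
  by_contra! hcon
  obtain ⟨hinter, hx⟩ := hcon
  have hdual := hmin _ h.neg_compl
  have hcompl := card_add_card_compl (Z + Y)
  rw [card_neg] at hdual
  have hlt : #(Z ∩ (x +ᵥ Z)) < #Z := by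
    refine card_lt_card (inter_subset_left.ssubset_of_ne fun he => hx ?_)
    exact (eq_of_subset_of_card_le (inter_eq_left.1 he) (by simp)).symm
  have hinter_add : Z ∩ (x +ᵥ Z) + Y ⊆ (Z + Y) ∩ (x +ᵥ (Z + Y)) := by
    rw [← vadd_add_assoc]
    exact inter_add_subset
  have hunion_add : Z ∪ (x +ᵥ Z) + Y = (Z + Y) ∪ (x +ᵥ (Z + Y)) := by
    rw [← vadd_add_assoc, union_add]
  have hcard_add := card_union_add_card_inter (Z + Y) (x +ᵥ (Z + Y))
  have hcard := card_union_add_card_inter Z (x +ᵥ Z)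
  rw [card_vadd_finset] at hcard_add hcard
  have := card_le_card hinter_add
  have := card_le_card (inter_subset_left : (Z + Y) ∩ (x +ᵥ (Z + Y)) ⊆ Z + Y)
  obtain ⟨h₁, h₂, h₃⟩ := h
  have hexpand : #(Z ∩ (x +ᵥ Z)) + #Y ≤ #(Z ∩ (x +ᵥ Z) + Y) := by
    by_contra! hsmall
    exact (hmin _ ⟨by omega, by omega, by omega⟩).not_gt hlt
  have hcauchy := hY (Z ∪ (x +ᵥ Z)) (card_pos.1 (by omega))
  by_cases huniv : Z ∪ (x +ᵥ Z) + Y = univ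
  · rw [← hunion_add, huniv, card_univ] at hcard_add
    omega
  · have := hcauchy huniv
    rw [hunion_add] at this
    omega

lemma isSidon_or_eq_vadd_elems (hY : IsCauchySet Y) (h : IsCritical Y Z)
    (hmin : ∀ M, IsCritical Y M → #Z ≤ #M) :
    IsSidon Z ∨ ∃ (K : AddSubgroup Q) (z : Q), K ≠ ⊥ ∧ Z = z +ᵥ elems K := by
  have hdich := card_inter_vadd_le_one_or_mem_stabilizer hY h hmin
  refine or_iff_not_imp_left.2 fun hsidon => ?_
  obtain ⟨x, hx₀, hx⟩ : ∃ x : Q, x ≠ 0 ∧ 1 < #(Z ∩ (x +ᵥ Z)) := by simpa [IsSidon] using hsidon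
  have hxK : x ∈ stabilizer Q Z := (hdich x).resolve_left (by omega)
  obtain ⟨z, hz⟩ : Z.Nonempty := card_pos.1 (by have := h.1; omega)
  refine ⟨stabilizer Q Z, z, fun hbot => hx₀ (by simpa [hbot] using hxK), ?_⟩
  ext w
  rw [← neg_vadd_mem_iff, mem_elems, vadd_eq_add, neg_add_eq_sub]
  refine ⟨fun hw => (hdich (w - z)).resolve_left ?_, fun hw => ?_⟩
  · have stable {y : Q} (hy : y ∈ Z) : x + y ∈ Z := (mem_stabilizer_finset.1 hxK y).2 hy
    refine (one_lt_card.2 ⟨w, ?_, x + w, ?_, by simpa using hx₀⟩).not_ge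
    · exact mem_inter.2 ⟨hw, mem_vadd_finset.2 ⟨z, hz, sub_add_cancel w z⟩⟩
    · exact mem_inter.2 ⟨stable hw, mem_vadd_finset.2 ⟨x + z, stable hz, by simp; abel⟩⟩
  · simpa using (mem_stabilizer_finset.1 hw z).2 hz

lemma two_mul_card_elems_le_card_elems_add (h₀ : 0 ∈ X) (hX : ¬ ∀ x ∈ X, x ∈ K) :
    2 * #(elems K) ≤ #(elems K + X) := by
  push Not at hX
  obtain ⟨x, hx, hxK⟩ := hX
  have hdisj : Disjoint (elems K) (x +ᵥ elems K) := by
    refine disjoint_left.2 fun z hz hz' => hxK ?_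
    obtain ⟨k, hk, rfl⟩ := mem_vadd_finset.1 hz'
    rw [mem_elems] at hz hk
    exact (K.add_mem_cancel_right hk).1 hz
  have hsub : elems K ∪ (x +ᵥ elems K) ⊆ elems K + X :=
    union_subset (subset_add_left _ h₀) (add_comm X (elems K) ▸ vadd_subset_add hx _)
  have := card_le_card hsub
  rw [card_union_of_disjoint hdisj, card_vadd_finset] at this
  omega

lemma IsSidon.card_elems_add_card_le (hX : IsSidon X) (h₀ : 0 ∈ X) (hK : K ≠ ⊥)
    (hXK : ¬ ∀ x ∈ X, x ∈ K) : #(elems K) + #X ≤ #(elems K + X) := by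
  have := two_mul_card_elems_le_card_elems_add h₀ hXK
  have := hX.two_mul_card_le (two_le_card_elems hK)
  omega

omit [Fintype Q] in
lemma IsSidon.card_add_card_le_or_closure_le [Finite Q] (hX : IsSidon X) (h₀ : 0 ∈ X)
    (hZ : Z.Nonempty) :
    #X + #Z ≤ #(X + Z) + 1 ∨ AddSubgroup.closure (X : Set Q) ≤ stabilizer Q (X + Z) := by
  cases nonempty_fintype Q
  have hkneser := kneser ⟨0, h₀⟩ hZ
  set K := stabilizer Q (X + Z)
  have hZK := card_le_card (subset_add_left Z (show (0 : Q) ∈ elems K by simp))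
  by_cases hXK : ∀ x ∈ X, x ∈ K
  · exact Or.inr ((AddSubgroup.closure_le K).2 hXK)
  refine Or.inl ?_
  by_cases hK : K = ⊥
  · simp only [hK, elems_bot, singleton_zero, add_zero] at hkneser
    exact hkneser
  · have := hX.card_elems_add_card_le h₀ hK hXK
    rw [add_comm (elems K)] at this
    omega

omit [Fintype Q] in
lemma disjoint_add_filter_add_filter (hX : ∀ x ∈ X, x ∈ K) (A : Finset Q) (n : Q) :
    Disjoint (X + {a ∈ A | a - n ∈ K}) (X + {a ∈ A | a - n ∉ K}) := by
  refine disjoint_left.2 fun z hz hz' => ?_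
  obtain ⟨x, hx, a, ha, rfl⟩ := mem_add.1 hz
  obtain ⟨x', hx', a', ha', he⟩ := mem_add.1 hz'
  rw [mem_filter] at ha ha'
  have hdiff : a' - n = x - x' + (a - n) := by rw [eq_sub_of_add_eq' he]; abel
  exact ha'.2 (hdiff ▸ K.add_mem (K.sub_mem (hX x hx) (hX x' hx')) ha.2)

omit [Fintype Q] in
lemma closure_le_stabilizer_of_card_add_le [Finite Q] {C : Finset Q} (h₀ : 0 ∈ X)
    (h : #(X + C) ≤ #C) : AddSubgroup.closure (X : Set Q) ≤ stabilizer Q C := by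
  have hC : C = X + C := eq_of_subset_of_card_le (subset_add_right C h₀) h
  refine (AddSubgroup.closure_le _).2 fun x hx => mem_stabilizer_iff.2 ?_
  exact eq_of_subset_of_card_le ((vadd_subset_add hx C).trans hC.ge) (by simp)

lemma IsSidon.card_elems_closure_add_lt (hX : IsSidon X) (h₀ : 0 ∈ X)
    (h : #(X + A) + 1 ≤ #X + #A) :
    #(elems (AddSubgroup.closure (X : Set Q)) + A)
      < #(elems (AddSubgroup.closure (X : Set Q))) + #A := by
  set L := AddSubgroup.closure (X : Set Q)
  have hXL : ∀ x ∈ X, x ∈ L := fun x hx => AddSubgroup.subset_closure hx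
  by_cases hall : elems L + A ⊆ X + A
  · have := card_le_card hall
    have := card_le_card (fun x hx => mem_elems.2 (hXL x hx) : X ⊆ elems L)
    omega
  obtain ⟨l, hl, n, hn, hln⟩ : ∃ l ∈ L, ∃ n ∈ A, l + n ∉ X + A := by
    simpa [add_subset_iff] using hall
  set A₁ : Finset Q := {a ∈ A | a - n ∈ L}
  set A₂ : Finset Q := {a ∈ A | a - n ∉ L}
  have hsplit : #A₁ + #A₂ = #A := card_filter_add_card_filter_not _
  have hn₁ : n ∈ A₁ := by simp [A₁, hn]
  have hA₁ : #X + #A₁ ≤ #(X + A₁) + 1 := by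
    refine (hX.card_add_card_le_or_closure_le h₀ ⟨n, hn₁⟩).resolve_right fun hle => hln ?_
    refine add_subset_add_left (filter_subset _ _) ((mem_stabilizer_finset.1 (hle hl) n).2 ?_)
    exact subset_add_right A₁ h₀ hn₁
  have hdisj : #(X + A) = #(X + A₁) + #(X + A₂) := by
    rw [← card_union_of_disjoint (disjoint_add_filter_add_filter hXL A n), ← add_union,
      filter_union_filter_not_eq]
  have hA₂ : L ≤ stabilizer Q A₂ := closure_le_stabilizer_of_card_add_le h₀ (by omega)
  have hsub : elems L + A ⊆ A₂ ∪ (n +ᵥ elems L) := by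
    refine add_subset_iff.2 fun k hk a ha => ?_
    rw [mem_elems] at hk
    by_cases han : a - n ∈ L
    · refine mem_union_right _ (mem_vadd_finset.2 ⟨k + (a - n), ?_, by simp; abel⟩)
      exact mem_elems.2 (L.add_mem hk han)
    · exact mem_union_left _ ((mem_stabilizer_finset.1 (hA₂ hk) a).2 (by simp [A₂, ha, han]))
  have := card_le_card hsub
  have := card_union_le A₂ (n +ᵥ elems L)
  have := card_vadd_finset n (elems L)
  have := card_pos.2 ⟨n, hn₁⟩
  omega

lemma IsSidon.isCauchySet (hX : IsSidon X) (h₀ : 0 ∈ X)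
    (hgen : AddSubgroup.closure (X : Set Q) = ⊤) : IsCauchySet X := by
  intro Z hZ hU
  rw [add_comm Z] at hU ⊢
  rw [add_comm #Z]
  refine (hX.card_add_card_le_or_closure_le h₀ hZ).resolve_right fun hle => hU ?_
  obtain ⟨z, hz⟩ := hZ
  refine eq_univ_of_forall fun w => ?_
  have := (mem_stabilizer_finset.1 (hle (hgen ▸ AddSubgroup.mem_top (w - z))) z).2
    (subset_add_right Z h₀ hz)
  simpa using this

lemma IsCritical.card_elems_add_lt {z : Q} (h : IsCritical Y (z +ᵥ elems K)) :
    #(elems K + Y) < #(elems K) + #Y ∧ elems K + Y ≠ univ := by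
  have h' : IsCritical Y (elems K) := by simpa using h.vadd (-z)
  exact ⟨h'.2.1, h'.add_ne_univ⟩

lemma IsSidon.not_isCritical (hX : IsSidon X) (h₀ : 0 ∈ X)
    (hgen : AddSubgroup.closure (X : Set Q) = ⊤) (hX₃ : 3 ≤ #X) : ¬ IsCritical X Z := by
  intro hZ
  obtain ⟨N, hN, hmin⟩ := exists_min_isCritical hZ
  obtain hsidon | ⟨K, z, hK, rfl⟩ := isSidon_or_eq_vadd_elems (hX.isCauchySet h₀ hgen) hN hmin
  · obtain ⟨hN₂, hN, -⟩ := hN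
    have := hX.two_mul_card_le hN₂
    have := hX.three_mul_card_le (N := N) (by omega)
    have := hsidon.three_mul_card_le hX₃
    rw [add_comm X N] at this
    omega
  · obtain ⟨hlt, hU⟩ := hN.card_elems_add_lt
    refine hlt.not_ge (hX.card_elems_add_card_le h₀ hK fun hXK => hU ?_)
    obtain rfl : K = ⊤ := top_unique (hgen ▸ (AddSubgroup.closure_le K).2 hXK)
    exact eq_univ_of_forall fun w => subset_add_left (elems ⊤) h₀ (by simp)

theorem exists_card_add_pair_le_of_isCritical (hC : IsCauchySet A) (hA : ExpandsSubgroups A)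
    (hq : 2 * #A ≤ Fintype.card Q) (hA₂ : 2 ≤ #A) (h : IsCritical A Z) :
    ∃ x, x ≠ 0 ∧ #(A + {0, x}) ≤ #A + 1 := by
  obtain ⟨M, hM, hmin⟩ := exists_min_isCritical h
  obtain hsidon | ⟨K, z, hK, rfl⟩ := isSidon_or_eq_vadd_elems hC hM hmin
  · obtain ⟨m, hm⟩ : M.Nonempty := card_pos.1 (by have := hM.1; omega)
    have h₀ : 0 ∈ -m +ᵥ M := mem_vadd_finset.2 ⟨m, hm, by simp⟩
    replace hM := hM.vadd (-m)
    replace hsidon := hsidon.vadd (-m)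
    generalize -m +ᵥ M = X at hM hsidon h₀
    obtain ⟨x, hxX, hx⟩ := exists_mem_ne hM.1 0
    refine ⟨x, hx, ?_⟩
    have hX₂ : #X ≤ 2 := by
      by_contra! hX₃
      refine hsidon.not_isCritical h₀ ?_ hX₃ (hM.symm hA₂)
      refine hA.eq_top_of_card_lt hq (fun hbot => hx ?_)
        (hsidon.card_elems_closure_add_lt h₀ hM.2.1)
      exact (AddSubgroup.closure_eq_bot_iff.1 hbot) hxX
    have hX : {0, x} = X := eq_of_subset_of_card_le (by simp [insert_subset_iff, h₀, hxX])
      (by rwa [card_pair hx.symm])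
    have := hM.2.1
    rw [hX, add_comm]
    omega
  · obtain ⟨hlt, hU⟩ := hM.card_elems_add_lt
    exact absurd (hA K hK hU) hlt.not_ge

end Vosper

/-! ### Weights on two intervals -/

section IntervalWeights

variable {h u v : ℕ} {s t x : ℕ → ℕ}

lemma sum_range_add_two (f : ℕ → ℕ) (n : ℕ) :
    ∑ k ∈ range (n + 2), f k = f 0 + ∑ k ∈ range n, f (k + 1) + f (n + 1) := by
  rw [sum_range_succ, sum_range_succ', add_comm (f 0)]

lemma sum_range_add_le_of_shift {r : ℕ → ℕ} {n c₀ c : ℕ} (hc₀ : c₀ ≤ c) (hc : c < n)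
    (hle : ∀ k < n, r k ≤ x k) (hshift : ∀ k < c, r k ≤ x (k + 1)) :
    ∑ k ∈ range n, r k + x c₀ ≤ ∑ k ∈ range n, x k + r c := by
  induction n, hc using Nat.le_induction with
  | base =>
    induction c, hc₀ using Nat.le_induction with
    | base =>
      have : ∑ k ∈ range c₀, r k ≤ ∑ k ∈ range c₀, x k :=
        sum_le_sum fun k hk => hle k (by grind)
      simp only [sum_range_succ]
      omega
    | succ c _ ih =>
      have hprev := ih (fun k hk => hshift k (by omega)) fun k hk => hle k (by grind)
      have := hshift c (by omega)
      rw [sum_range_succ _ (c + 1), sum_range_succ x (c + 1)]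
      rw [Nat.succ_eq_add_one] at hprev
      omega
  | succ n _ ih =>
    have := ih fun k hk => hle k (by omega)
    have := hle n (by omega)
    simp only [sum_range_succ] at *
    omega

/-- Nonnegative weights `s` on `{0, …, u}`, `t` on `{0, …, v}` and `x` on `{0, …, u + v}`, bounded
by `h`. They model the sizes of the intersections of two sets and of their sum with the cosets of
a subgroup of order `h`, when the cosets involved form arithmetic progressions. -/
structure IntervalWeights (h u v : ℕ) (s t x : ℕ → ℕ) : Prop where
  one_le_left : 1 ≤ u
  one_le_right : 1 ≤ v
  left_le : ∀ i ≤ u, s i ≤ h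
  right_le : ∀ j ≤ v, t j ≤ h
  le : ∀ k, x k ≤ h
  left_le_add : ∀ i ≤ u, ∀ j ≤ v, s i ≤ x (i + j)
  right_le_add : ∀ i ≤ u, ∀ j ≤ v, t j ≤ x (i + j)
  add_eq : ∀ i ≤ u, ∀ j ≤ v, h < s i + t j → x (i + j) = h
  two_mul_add_ge : ∀ i ≤ u, ∀ j ≤ v, h < 2 * s i → x (i + j) < h → s i + 2 * t j ≤ 2 * x (i + j)
  sum_add_one : ∑ k ∈ range (u + v + 1), x k + 1 =
    ∑ i ∈ range (u + 1), s i + ∑ j ∈ range (v + 1), t j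
  lt_sum_left : u * h < ∑ i ∈ range (u + 1), s i

/-- The lower bound for `x` given by `s 0, …, s (i - 1), t 0, …, t v, s (i + 1), …, s u`: the
indices of `x` are walked through with the first summand fixed at `i` whenever possible. -/
def row (s t : ℕ → ℕ) (v i k : ℕ) : ℕ :=
  if k < i then s k else if k ≤ i + v then t (k - i) else s (k - v)

lemma row_add_left {i j : ℕ} (hj : j ≤ v) : row s t v i (i + j) = t j := by
  rw [row, if_neg (by omega), if_pos (by omega), Nat.add_sub_cancel_left]

lemma sum_row_add {i : ℕ} (hi : i ≤ u) : ∑ k ∈ range (u + v + 1), row s t v i k + s i =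
    ∑ k ∈ range (u + 1), s k + ∑ k ∈ range (v + 1), t k := by
  obtain ⟨w, rfl⟩ := Nat.exists_eq_add_of_le hi
  have hleft : ∑ k ∈ range i, row s t v i k = ∑ k ∈ range i, s k :=
    sum_congr rfl fun k hk => if_pos (mem_range.1 hk)
  have hmid : ∑ k ∈ range (v + 1), row s t v i (i + k) = ∑ k ∈ range (v + 1), t k :=
    sum_congr rfl fun k hk => row_add_left (by grind)
  have hright : ∑ k ∈ range w, row s t v i (i + (v + 1) + k) = ∑ k ∈ range w, s (i + 1 + k) :=
    sum_congr rfl fun k _ => by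
      rw [row, if_neg (by omega), if_neg (by omega)]
      congr 1
      omega
  rw [show i + w + v + 1 = i + (v + 1) + w by ring, show i + w + 1 = i + 1 + w by ring,
    sum_range_add _ (i + (v + 1)), sum_range_add _ i, sum_range_add _ (i + 1),
    sum_range_succ s, hleft, hmid, hright]
  ring

namespace IntervalWeights

lemma reverse (W : IntervalWeights h u v s t x) :
    IntervalWeights h u v (fun i => s (u - i)) (fun j => t (v - j)) fun k => x (u + v - k) := by
  have hsub {i j : ℕ} (hi : i ≤ u) (hj : j ≤ v) : u - i + (v - j) = u + v - (i + j) := by omega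
  have hflip (f : ℕ → ℕ) (n : ℕ) : ∑ k ∈ range (n + 1), f (n - k) = ∑ k ∈ range (n + 1), f k := by
    simpa using sum_range_reflect f (n + 1)
  refine ⟨W.one_le_left, W.one_le_right, fun i _ => W.left_le _ (Nat.sub_le u i),
    fun j _ => W.right_le _ (Nat.sub_le v j), fun _ => W.le _, fun i hi j hj => ?_,
    fun i hi j hj => ?_, fun i hi j hj => ?_, fun i hi j hj => ?_, ?_, ?_⟩
  · exact hsub hi hj ▸ W.left_le_add _ (Nat.sub_le u i) _ (Nat.sub_le v j)
  · exact hsub hi hj ▸ W.right_le_add _ (Nat.sub_le u i) _ (Nat.sub_le v j)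
  · exact hsub hi hj ▸ W.add_eq _ (Nat.sub_le u i) _ (Nat.sub_le v j)
  · exact hsub hi hj ▸ W.two_mul_add_ge _ (Nat.sub_le u i) _ (Nat.sub_le v j)
  · simpa only [hflip] using W.sum_add_one
  · simpa only [hflip] using W.lt_sum_left

lemma row_le (W : IntervalWeights h u v s t x) {i k : ℕ} (hi : i ≤ u) (hk : k < u + v + 1) :
    row s t v i k ≤ x k := by
  unfold row
  split_ifs with hki hkv
  · exact W.left_le_add k (by omega) 0 (by omega)
  · simpa [show i + (k - i) = k by omega] using W.right_le_add i hi (k - i) (by omega)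
  · simpa [show k - v + v = k by omega] using W.left_le_add (k - v) (by omega) v le_rfl

lemma sum_add_one_eq_sum_row (W : IntervalWeights h u v s t x) {i : ℕ} (hi : i ≤ u) :
    ∑ k ∈ range (u + v + 1), x k + 1 = ∑ k ∈ range (u + v + 1), row s t v i k + s i := by
  rw [W.sum_add_one, sum_row_add hi]

lemma lt_of_lt_of_lt (W : IntervalWeights h u v s t x) {c₀ c : ℕ} (hc₀ : c₀ < c) (hc : c < u + v)
    (hxc : x c < h) : x c₀ < h := by
  obtain ⟨i, j, hi, hj, rfl⟩ : ∃ i j, i < u ∧ j ≤ v ∧ i + j = c := by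
    have := W.one_le_left
    obtain hcu | hcu := lt_or_ge c u
    · exact ⟨c, 0, hcu, by omega, by omega⟩
    · exact ⟨u - 1, c - (u - 1), by omega, by omega, by omega⟩
  have hshift : ∀ k < i + j, row s t v i k ≤ x (k + 1) := fun k hk => by
    unfold row
    split_ifs with hki hkv
    · exact W.left_le_add k (by omega) 1 W.one_le_right
    · simpa [show i + 1 + (k - i) = k + 1 by omega] using
        W.right_le_add (i + 1) hi (k - i) (by omega)
    · omega
  have hsum := sum_range_add_le_of_shift hc₀.le (by omega) (fun k => W.row_le hi.le) hshift
  have htotal := W.sum_add_one_eq_sum_row hi.le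
  have hfull := W.add_eq i hi.le j hj
  rw [row_add_left hj] at hsum
  omega

lemma lt_of_gt_of_lt (W : IntervalWeights h u v s t x) {c c₀ : ℕ} (hc : 0 < c) (hc₀ : c < c₀)
    (hc₀' : c₀ ≤ u + v) (hxc : x c < h) : x c₀ < h := by
  have hrev : x (u + v - (u + v - c₀)) < h :=
    W.reverse.lt_of_lt_of_lt (c := u + v - c) (by omega) (by omega)
      (by rwa [Nat.sub_sub_self (by omega)])
  rwa [Nat.sub_sub_self hc₀'] at hrev

lemma exists_lt_two_mul (W : IntervalWeights h u v s t x) : ∃ i ≤ 1, h < 2 * s i := by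
  obtain ⟨w, hw⟩ := Nat.exists_eq_add_of_le W.one_le_left
  have hsum := W.lt_sum_left
  have hrest : ∑ k ∈ range w, s (2 + k) ≤ w * h := by
    simpa using sum_le_card_nsmul (range w) (fun k => s (2 + k)) h fun k hk =>
      W.left_le _ (by grind)
  rw [hw, show 1 + w + 1 = 2 + w by ring, sum_range_add, sum_range_succ, sum_range_one,
    Nat.add_mul] at hsum
  by_contra! hcon
  have := hcon 0 (by omega)
  have := hcon 1 le_rfl
  omega

lemma exists_eq (W : IntervalWeights h u v s t x) : ∃ k ≤ u + v, x k = h := by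
  by_contra! hcon
  have hlt (k : ℕ) (hk : k ≤ u + v) : x k < h := (W.le k).lt_of_ne (hcon k hk)
  obtain ⟨i, hi₁, hi⟩ := W.exists_lt_two_mul
  have hu := W.one_le_left
  have hv := W.one_le_right
  have hgap : ∑ k ∈ range (u + v + 1), (x k - row s t v i k) + 1 = s i := by
    have := W.sum_add_one_eq_sum_row (i := i) (by omega)
    rw [sum_tsub_distrib _ fun k hk => W.row_le (by omega) (mem_range.1 hk)]
    have : ∑ k ∈ range (u + v + 1), row s t v i k ≤ ∑ k ∈ range (u + v + 1), x k :=
      sum_le_sum fun k hk => W.row_le (by omega) (mem_range.1 hk)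
    omega
  have hpair := sum_le_sum_of_subset (f := fun k => x k - row s t v i k)
    (show {i + 0, i + 1} ⊆ range (u + v + 1) by grind)
  rw [sum_pair (by omega), row_add_left (Nat.zero_le v), row_add_left hv] at hpair
  have := W.two_mul_add_ge i (by omega) 0 (by omega) hi (hlt _ (by omega))
  have := W.two_mul_add_ge i (by omega) 1 hv hi (hlt _ (by omega))
  omega

lemma eq_of_pos_of_lt (W : IntervalWeights h u v s t x) {k : ℕ} (hk : 0 < k) (hk' : k < u + v) :
    x k = h := by
  by_contra hne
  have hlt := (W.le k).lt_of_ne hne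
  obtain ⟨k₀, hk₀, hfull⟩ := W.exists_eq
  obtain hkk | rfl | hkk := lt_trichotomy k₀ k
  · exact (W.lt_of_lt_of_lt hkk hk' hlt).ne hfull
  · exact hne hfull
  · exact (W.lt_of_gt_of_lt hk hkk hk₀ hlt).ne hfull

lemma eq_zero_or_eq_last (W : IntervalWeights h u v s t x) : x 0 = h ∨ x (u + v) = h := by
  by_contra! hcon
  obtain ⟨h0, hlast⟩ := hcon
  have hst₀ : s 0 + t 0 ≤ h := le_of_not_gt fun hlt => h0 (W.add_eq 0 (by simp) 0 (by simp) hlt)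
  have hst : s u + t v ≤ h := le_of_not_gt fun hlt => hlast (W.add_eq u le_rfl v le_rfl hlt)
  have := W.left_le_add 0 (by simp) 0 (by simp)
  have := W.right_le_add 0 (by simp) 0 (by simp)
  have := W.left_le_add u le_rfl v le_rfl
  have := W.right_le_add u le_rfl v le_rfl
  have htotal := W.sum_add_one
  obtain ⟨m, rfl⟩ := Nat.exists_eq_add_of_le' W.one_le_left
  obtain ⟨n, rfl⟩ := Nat.exists_eq_add_of_le' W.one_le_right
  have hs : ∑ k ∈ range m, s (k + 1) ≤ m * h := by
    simpa using sum_le_card_nsmul (range m) (fun k => s (k + 1)) h fun k hk =>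
      W.left_le _ (by grind)
  have ht : ∑ k ∈ range n, t (k + 1) ≤ n * h := by
    simpa using sum_le_card_nsmul (range n) (fun k => t (k + 1)) h fun k hk =>
      W.right_le _ (by grind)
  have hx : ∑ k ∈ range (m + n + 1), x (k + 1) = (m + n + 1) * h := by
    simpa using sum_congr rfl fun k (hk : k ∈ range (m + n + 1)) =>
      W.eq_of_pos_of_lt k.succ_pos (by grind)
  rw [show m + 1 + (n + 1) + 1 = m + n + 1 + 2 by ring, sum_range_add_two, sum_range_add_two,
    sum_range_add_two, hx] at htotal
  rw [show m + 1 + (n + 1) = m + n + 1 + 1 by ring] at *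
  simp only [add_zero, Nat.add_mul] at *
  omega

end IntervalWeights

end IntervalWeights

/-! ### Weights on a group -/

section CosetWeights

variable {Q : Type*} [Fintype Q] {h : ℕ} {f s t x : Q → ℕ}

/-- The support of a weight function, as a finite set. -/
def supp (f : Q → ℕ) : Finset Q := {a | 0 < f a}

@[simp] lemma mem_supp {a : Q} : a ∈ supp f ↔ 0 < f a := by simp [supp]

lemma sum_supp (f : Q → ℕ) : ∑ a ∈ supp f, f a = ∑ a, f a :=
  sum_subset (subset_univ _) fun a _ ha => by simpa using ha

lemma sum_le_card_mul {ι : Type*} {f : ι → ℕ} (hf : ∀ a, f a ≤ h) (I : Finset ι) :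
    ∑ a ∈ I, f a ≤ #I * h := by
  simpa using sum_le_card_nsmul I f h fun a _ => hf a

lemma eq_of_card_mul_le_sum {ι : Type*} {f : ι → ℕ} (hf : ∀ a, f a ≤ h) {I : Finset ι}
    (hI : #I * h ≤ ∑ a ∈ I, f a) {a : ι} (ha : a ∈ I) : f a = h :=
  (sum_eq_sum_iff_of_le fun a _ => hf a).1
    (le_antisymm (by simpa using sum_le_card_mul hf I) (by simpa using hI)) a ha

/-- The superlevel set `{a | j ≤ f a}` of a weight function. -/
def level (f : Q → ℕ) (j : ℕ) : Finset Q := {a | j ≤ f a}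

@[simp] lemma mem_level {j : ℕ} {a : Q} : a ∈ level f j ↔ j ≤ f a := by simp [level]

lemma level_subset_supp {j : ℕ} (hj : 1 ≤ j) : level f j ⊆ supp f := fun a ha => by
  rw [mem_level] at ha
  rw [mem_supp]
  omega

lemma sum_eq_sum_card_level (hf : ∀ a, f a ≤ h) :
    ∑ a, f a = ∑ j ∈ Icc 1 h, #(level f j) := by
  simp only [level, card_filter]
  rw [sum_comm]
  refine sum_congr rfl fun a _ => ?_
  rw [← card_filter, show {j ∈ Icc 1 h | j ≤ f a} = Icc 1 (f a) by grind [hf a], Nat.card_Icc,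
    Nat.add_sub_cancel]

variable [AddCommGroup Q]

/-- Weights on a quotient group `Q` that record the sizes of the intersections of two sets and of
their sum with the cosets of the kernel, a subgroup of order `h`. From `sum_add_one` on, the fields
express that the sum of the two sets is as small as Kneser's theorem allows and not too large, and
that the kernel is a hyper-atom of the first set. -/
structure CosetWeights (h : ℕ) (s t x : Q → ℕ) : Prop where
  pos : 0 < h
  left_le : ∀ a, s a ≤ h
  right_le : ∀ b, t b ≤ h
  le : ∀ c, x c ≤ h
  left_le_add : ∀ a b, 0 < s a → 0 < t b → s a ≤ x (a + b)
  right_le_add : ∀ a b, 0 < s a → 0 < t b → t b ≤ x (a + b)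
  add_eq : ∀ a b, 0 < s a → 0 < t b → h < s a + t b → x (a + b) = h
  three_mul_add_ge : ∀ a b, h < 2 * s a → 0 < t b → x (a + b) < h → h + 3 * t b ≤ 3 * x (a + b)
  two_mul_add_ge : ∀ a b, h < 2 * s a → 0 < t b → x (a + b) < h → s a + 2 * t b ≤ 2 * x (a + b)
  exists_add : ∀ c, 0 < x c → ∃ a b, 0 < s a ∧ 0 < t b ∧ a + b = c
  sum_add_one : ∑ c, x c + 1 = ∑ a, s a + ∑ b, t b
  three_mul_sum_le : 3 * ∑ c, x c ≤ 2 * (Fintype.card Q * h) + 2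
  card_mul_add_one_le : #(supp s) * h + 1 ≤ ∑ a, s a + h
  sum_left_le : ∑ a, s a ≤ ∑ b, t b
  two_le_card : 2 ≤ #(supp s)
  three_mul_card_le : 3 * #(supp s) ≤ Fintype.card Q + 2
  isCauchySet : IsCauchySet (supp s)

namespace CosetWeights

lemma card_mul_add_one_le_sum (W : CosetWeights h s t x) {I : Finset Q} (hI : I ⊆ supp s) :
    #I * h + 1 ≤ ∑ a ∈ I, s a + h := by
  have hsum := sum_sdiff (f := s) hI
  have hrest := sum_le_card_mul W.left_le (supp s \ I)
  have htotal := W.card_mul_add_one_le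
  rw [← card_sdiff_add_card_eq_card hI, add_mul] at htotal
  rw [sum_supp] at hsum
  omega

lemma lt_add_of_ne (W : CosetWeights h s t x) {a b : Q} (ha : 0 < s a) (hb : 0 < s b)
    (hab : a ≠ b) : h < s a + s b := by
  have := W.card_mul_add_one_le_sum (I := {a, b}) (by simp [insert_subset_iff, ha, hb])
  rw [card_pair hab, sum_pair hab] at this
  omega

lemma four_le_card (W : CosetWeights h s t x) : 4 ≤ Fintype.card Q := by
  have := W.two_le_card
  have := W.three_mul_card_le
  omega

lemma exists_lt (W : CosetWeights h s t x) : ∃ c, x c < h := by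
  by_contra! hfull
  have hsum : ∑ c, x c = Fintype.card Q * h := by
    simpa using sum_congr rfl fun c (_ : c ∈ univ) => (W.le c).antisymm (hfull c)
  have := W.three_mul_sum_le
  have := Nat.mul_le_mul W.four_le_card W.pos
  omega

lemma supp_add_supp (W : CosetWeights h s t x) : supp s + supp t = supp x := by
  ext c
  simp only [mem_add, mem_supp]
  constructor
  · rintro ⟨a, ha, b, hb, rfl⟩
    exact ha.trans_le (W.left_le_add a b ha hb)
  · intro hc
    obtain ⟨a, b, ha, hb, rfl⟩ := W.exists_add c hc
    exact ⟨a, ha, b, hb, rfl⟩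

lemma card_supp_le (W : CosetWeights h s t x) : #(supp s) ≤ #(supp t) := by
  have hsum := sum_le_card_mul W.right_le (supp t)
  rw [sum_supp] at hsum
  have := W.card_mul_add_one_le
  have := W.sum_left_le
  refine Nat.lt_succ_iff.1 (lt_of_mul_lt_mul_right (a := h) ?_ h.zero_le)
  rw [Nat.succ_mul]
  omega

lemma nonempty_left (W : CosetWeights h s t x) : (supp s).Nonempty :=
  card_pos.1 (by have := W.two_le_card; omega)

lemma nonempty_right (W : CosetWeights h s t x) : (supp t).Nonempty :=
  card_pos.1 (by have := W.two_le_card; have := W.card_supp_le; omega)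

lemma supp_add_level_subset (W : CosetWeights h s t x) {j : ℕ} (hj : 1 ≤ j) :
    supp s + level t j ⊆ level x j := by
  intro c hc
  obtain ⟨a, ha, b, hb, rfl⟩ := mem_add.1 hc
  rw [mem_supp] at ha
  rw [mem_level] at hb ⊢
  exact hb.trans (W.right_le_add a b ha (by omega))

lemma level_add_supp_subset (W : CosetWeights h s t x) {j : ℕ} (hj : 1 ≤ j) :
    level s j + supp t ⊆ level x j := by
  intro c hc
  obtain ⟨a, ha, b, hb, rfl⟩ := mem_add.1 hc
  rw [mem_supp] at hb
  rw [mem_level] at ha ⊢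
  exact ha.trans (W.left_le_add a b (by omega) hb)

lemma card_level_add_card_level_le_card (W : CosetWeights h s t x) {j : ℕ} {a : Q} (ha : 0 < s a)
    (haj : s a < j) : #(level s j) + #(level t j) ≤ Fintype.card Q := by
  by_contra! hcard
  obtain ⟨c, hc⟩ := W.exists_lt
  obtain ⟨a', ha', b, hb, rfl⟩ := mem_add.1
    (mem_add_of_card_lt (c := c) (subset_univ (level s j)) (fun b _ => mem_univ (c - b)) hcard)
  rw [mem_level] at ha' hb
  have := W.lt_add_of_ne (a := a') (b := a) (by omega) ha (by grind)
  exact hc.ne (W.add_eq a' b (by omega) (by omega) (by omega))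

lemma card_level_add_card_level_le (W : CosetWeights h s t x)
    (hcard : #(supp s) + #(supp t) ≤ #(supp x)) {j : ℕ} (hj : 1 ≤ j) :
    #(level s j) + #(level t j) ≤ #(level x j) := by
  have hs : #(level s j) ≤ #(supp s) := card_le_card (level_subset_supp hj)
  have ht : #(level t j) ≤ #(supp t) := card_le_card (level_subset_supp hj)
  by_cases hlow : supp s ⊆ level s j
  · have := card_le_card ((add_subset_add_right hlow).trans (W.level_add_supp_subset hj))
    rw [W.supp_add_supp] at this
    omega
  obtain ⟨a, ha, haj⟩ := not_subset.1 hlow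
  have hs' : #(level s j) < #(supp s) :=
    card_lt_card ⟨level_subset_supp hj, fun hsub => haj (hsub ha)⟩
  obtain hempty | hne := (level t j).eq_empty_or_nonempty
  · have := card_le_card (W.level_add_supp_subset hj)
    have := card_le_card_add_right (s := level s j) W.nonempty_right
    simp only [hempty, card_empty]
    omega
  have hsub := card_le_card (W.supp_add_level_subset hj)
  by_cases huniv : supp s + level t j = univ
  · rw [huniv, card_univ] at hsub
    exact (W.card_level_add_card_level_le_card (mem_supp.1 ha) (by simpa using haj)).trans hsub
  · rw [add_comm] at hsub huniv
    have := W.isCauchySet _ hne huniv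
    omega

lemma card_supp_add_one_le (W : CosetWeights h s t x) :
    #(supp x) + 1 ≤ #(supp s) + #(supp t) := by
  by_contra! hcard
  have hsum : ∑ a, s a + ∑ b, t b ≤ ∑ c, x c := by
    rw [sum_eq_sum_card_level W.left_le, sum_eq_sum_card_level W.right_le,
      sum_eq_sum_card_level W.le, ← sum_add_distrib]
    exact sum_le_sum fun j hj =>
      W.card_level_add_card_level_le (by omega) (mem_Icc.1 hj).1
  have := W.sum_add_one
  omega

end CosetWeights

end CosetWeights

/-! ### Cosets missed by the sum -/

section Defect

variable {Q : Type*} [Fintype Q] [AddCommGroup Q] {h : ℕ} {s t x : Q → ℕ}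

namespace CosetWeights

lemma exists_max (W : CosetWeights h s t x) :
    ∃ a, 0 < s a ∧ h < 2 * s a ∧ ∀ a' ∈ supp s, s a' ≤ s a := by
  obtain ⟨a, ha, hmax⟩ := exists_max_image (supp s) s W.nonempty_left
  obtain ⟨a', ha', hne⟩ := exists_mem_ne W.two_le_card a
  have := hmax a' ha'
  rw [mem_supp] at ha ha'
  have := W.lt_add_of_ne ha' ha hne
  exact ⟨a, ha, by omega, hmax⟩

lemma sum_tsub_add_sum_left (W : CosetWeights h s t x) :
    ∑ a ∈ supp s, (h - s a) + ∑ a, s a = #(supp s) * h := by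
  rw [← sum_supp, ← sum_add_distrib, sum_congr rfl fun a _ => Nat.sub_add_cancel (W.left_le a)]
  simp

lemma sum_tsub_add_one_le (W : CosetWeights h s t x) : ∑ a ∈ supp s, (h - s a) + 1 ≤ h := by
  have := W.sum_tsub_add_sum_left
  have := W.card_mul_add_one_le
  omega

omit [AddCommGroup Q] in
lemma card_sdiff_mul_add_sum_tsub_le {a : Q} (hmax : ∀ a' ∈ supp s, s a' ≤ s a) {I : Finset Q}
    (hI : I ⊆ supp s) :
    #(supp s \ I) * (h - s a) + ∑ a' ∈ I, (h - s a') ≤ ∑ a' ∈ supp s, (h - s a') := by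
  rw [← sum_sdiff hI]
  gcongr
  simpa using card_nsmul_le_sum (supp s \ I) (fun a' => h - s a') (h - s a) fun a' ha' =>
    Nat.sub_le_sub_left (hmax a' (sdiff_subset ha')) h

lemma sum_tsub_add_sum (W : CosetWeights h s t x) (a : Q) :
    ∑ b, (h - x (a + b)) + ∑ c, x c = Fintype.card Q * h := by
  rw [← Equiv.sum_comp (Equiv.addLeft a) x, ← sum_add_distrib]
  simpa using sum_congr rfl fun b (_ : b ∈ univ) => Nat.sub_add_cancel (W.le (a + b))

lemma card_mul_le_sum_tsub (W : CosetWeights h s t x) (a : Q) :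
    Fintype.card Q * h ≤ 3 * ∑ b, (h - x (a + b)) + 2 := by
  have := W.sum_tsub_add_sum a
  have := W.three_mul_sum_le
  omega

lemma card_filter_lt_mul_le (W : CosetWeights h s t x) {a : Q} (ha : h < 2 * s a) {B : Finset Q}
    (hB : B ⊆ supp t) :
    #{b ∈ B | x (a + b) < h} * h + 3 * (Fintype.card Q * h) + 3 ≤
      3 * (#B * h) + 3 * ∑ a', s a' + 3 * ∑ b ∈ Bᶜ, (t b + (h - x (a + b))) := by
  have hterm (b) (hb : b ∈ B) :
      (if x (a + b) < h then h else 0) + 3 * (t b + (h - x (a + b))) ≤ 3 * h := by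
    have hb := mem_supp.1 (hB hb)
    have := W.right_le_add a b (by omega) hb
    have := W.three_mul_add_ge a b ha hb
    have := W.le (a + b)
    split_ifs <;> omega
  have hsum := sum_le_card_nsmul B _ _ hterm
  rw [sum_add_distrib, ← mul_sum, ← sum_filter, sum_const, smul_eq_mul, smul_eq_mul] at hsum
  have htotal := sum_add_sum_compl B fun b => t b + (h - x (a + b))
  rw [sum_add_distrib (s := univ)] at htotal
  have := W.sum_tsub_add_sum a
  have := W.sum_add_one
  linarith

lemma card_mul_le_of_subset (W : CosetWeights h s t x) {a : Q} (ha : 0 < s a) {B : Finset Q}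
    (hB : B ⊆ supp t) :
    Fintype.card Q * h ≤ 3 * (#{b ∈ B | x (a + b) < h} * (h - s a) +
      ∑ b ∈ Bᶜ, (h - x (a + b))) + 2 := by
  have hterm (b) (hb : b ∈ B) : h - x (a + b) ≤ if x (a + b) < h then h - s a else 0 := by
    have := W.left_le_add a b ha (mem_supp.1 (hB hb))
    split_ifs <;> omega
  have hsum := sum_le_sum hterm
  rw [← sum_filter, sum_const, smul_eq_mul] at hsum
  have := sum_add_sum_compl B fun b => h - x (a + b)
  have := W.card_mul_le_sum_tsub a
  omega

lemma min_le_of_mem (W : CosetWeights h s t x) {a : Q} (hmin : ∀ a' ∈ supp s, s a ≤ s a') {c : Q}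
    (hc : c ∈ supp s + supp t) : s a ≤ x c := by
  obtain ⟨a', ha', b, hb, rfl⟩ := mem_add.1 hc
  exact (hmin a' ha').trans (W.left_le_add a' b (mem_supp.1 ha') (mem_supp.1 hb))

-- The deficiencies `h - x (a₀ + b)` add up to about `|Q| h / 3` or more. If `s a₀` is maximal, each
-- is at most `h - s a₀` for `b` in the support of `t` and, were the sum everything, at most
-- `h - min s` for the remaining `b`, which are too few.
lemma add_ne_univ_of_three_le (W : CosetWeights h s t x) (hs : 3 ≤ #(supp s)) :
    supp s + supp t ≠ univ := by
  intro huniv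
  obtain ⟨a₀, ha₀, -, hmax⟩ := W.exists_max
  obtain ⟨a₁, ha₁, hmin⟩ := exists_min_image (supp s) s W.nonempty_left
  have hcard := W.card_supp_add_one_le
  rw [← W.supp_add_supp, huniv, card_univ] at hcard
  obtain ⟨E, hE⟩ := Nat.exists_eq_add_of_le
    (Nat.sub_le_sub_left (hmin a₀ (mem_supp.2 ha₀)) h)
  have hdef := (Nat.succ_le_succ (card_sdiff_mul_add_sum_tsub_le hmax
    (singleton_subset_iff.2 ha₁))).trans W.sum_tsub_add_one_le
  rw [card_sdiff_of_subset (singleton_subset_iff.2 ha₁), card_singleton, sum_singleton, hE,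
    Nat.succ_eq_add_one] at hdef
  have hR := W.card_mul_le_of_subset ha₀ subset_rfl
  have hfew : #{b ∈ supp t | x (a₀ + b) < h} ≤ #(supp t) := card_filter_le _ _
  have hrest : ∑ b ∈ (supp t)ᶜ, (h - x (a₀ + b)) ≤ #(supp t)ᶜ * (h - s a₁) := by
    simpa using sum_le_card_nsmul (supp t)ᶜ (fun b => h - x (a₀ + b)) (h - s a₁) fun b _ =>
      Nat.sub_le_sub_left (W.min_le_of_mem hmin (huniv ▸ mem_univ (a₀ + b))) h
  have hcompl := card_add_card_compl (supp t)
  have hq := W.three_mul_card_le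
  rw [hE] at hrest
  obtain ⟨u, hu⟩ := Nat.exists_eq_add_of_le' (Nat.one_le_of_lt hs)
  rw [hu, Nat.add_sub_cancel] at hdef
  rw [hu] at hs hcard hq
  generalize h - s a₀ = D, #{b ∈ supp t | x (a₀ + b) < h} = w, #(supp t)ᶜ = r,
    #(supp t) = m, Fintype.card Q = q, ∑ b ∈ (supp t)ᶜ, (h - x (a₀ + b)) = R at *
  have hwD : w * D ≤ m * D := Nat.mul_le_mul_right D hfew
  have hqD : 3 * (q * D) ≤ (u + 1) * (q * D) := Nat.mul_le_mul_right _ (by omega)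
  have hrE : 3 * (r * E) ≤ q * E := by
    rw [← mul_assoc]
    exact Nat.mul_le_mul_right _ (by omega)
  have hqh := Nat.mul_le_mul_left q hdef
  subst hcompl
  nlinarith

lemma exists_eq_of_card_eq_two (W : CosetWeights h s t x) (hs : #(supp s) = 2) {a₀ a₁ : Q}
    (ha₀ : 0 < s a₀) (ha₁ : 0 < s a₁) (hne : a₀ ≠ a₁) (hfull : ∃ b, x (a₀ + b) = h) :
    ∃ b, x (a₀ + b) = h ∧ x (a₁ + b) < h := by
  by_contra! hcon
  obtain ⟨c, hc⟩ := W.exists_lt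
  set Z : Finset Q := {b | x (a₀ + b) = h}
  have hA : supp s = {a₀, a₁} :=
    (eq_of_subset_of_card_le (by simp [insert_subset_iff, ha₀, ha₁])
      (by rw [hs, card_pair hne])).symm
  have hsub : Z + supp s ⊆ a₀ +ᵥ Z := by
    intro c hc
    obtain ⟨b, hb, a, ha, rfl⟩ := mem_add.1 hc
    rw [mem_vadd_finset]
    replace hb : x (a₀ + b) = h := by simpa [Z] using hb
    obtain rfl | rfl : a = a₀ ∨ a = a₁ := by simpa [hA] using ha
    · exact ⟨b, by simpa [Z], by rw [vadd_eq_add, add_comm]⟩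
    · refine ⟨a + b - a₀, ?_, by rw [vadd_eq_add]; abel⟩
      simpa [Z] using (W.le _).antisymm (hcon b hb)
  have hcard := card_le_card hsub
  rw [card_vadd_finset] at hcard
  have hcauchy := W.isCauchySet Z (by simpa [Z, Finset.Nonempty] using hfull) fun huniv => by
    obtain ⟨b, hb, rfl⟩ := mem_vadd_finset.1 (hsub (huniv ▸ mem_univ c))
    rw [vadd_eq_add, (mem_filter.1 hb).2] at hc
    exact hc.false
  omega

lemma tsub_lt_add_tsub_of_erase_subset (W : CosetWeights h s t x) {a₀ a₁ b : Q}
    (ha₀ : h < 2 * s a₀) (hD : h - s a₀ + (h - s a₁) + 1 ≤ h)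
    (hsum : ∑ a, s a = s a₀ + s a₁) (hB : univ.erase b ⊆ supp t) :
    h - s a₁ < t b + (h - x (a₀ + b)) := by
  by_contra! hb
  have hw := W.card_filter_lt_mul_le ha₀ hB
  have hR := W.card_mul_le_of_subset (a := a₀) (by omega) hB
  have hcompl : (univ.erase b)ᶜ = {b} := by simp [compl_erase]
  have hcard : #(univ.erase b) + 1 = Fintype.card Q := card_erase_add_one (mem_univ b)
  simp only [hcompl, sum_singleton] at hw hR
  have hq := Nat.mul_le_mul_right h W.four_le_card
  have := W.left_le a₀
  have := W.left_le a₁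
  rw [← hcard, add_mul] at hw
  obtain hw₁ | hw₂ : #{b ∈ univ.erase b | x (a₀ + b) < h} ≤ 1 ∨
      2 ≤ #{b ∈ univ.erase b | x (a₀ + b) < h} := by omega
  · have := Nat.mul_le_mul_right (h - s a₀) hw₁
    omega
  · have hw₃ : #{b ∈ univ.erase b | x (a₀ + b) < h} < 3 := by
      by_contra! h3
      have := Nat.mul_le_mul_right h h3
      omega
    rw [show #{b ∈ univ.erase b | x (a₀ + b) < h} = 2 by omega] at hw hR
    omega

lemma exists_eq_of_supp_eq_univ (W : CosetWeights h s t x) {a₀ a₁ : Q} (ha₀ : h < 2 * s a₀)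
    (hD : h - s a₀ + (h - s a₁) + 1 ≤ h) (hle : s a₁ ≤ s a₀) (hsum : ∑ a, s a = s a₀ + s a₁)
    (ht : supp t = univ) : ∃ b, x (a₀ + b) = h := by
  by_contra! hcon
  have hw := W.card_filter_lt_mul_le ha₀ ht.superset
  have hR := W.card_mul_le_of_subset (a := a₀) (by omega) ht.superset
  rw [filter_true_of_mem fun b _ => (W.le _).lt_of_ne (hcon b), compl_univ, sum_empty,
    card_univ] at hw hR
  have hq := W.four_le_card
  have hqh := Nat.mul_le_mul_right h hq
  have hq₅ : Fintype.card Q ≤ 5 := by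
    by_contra! h6
    have := Nat.mul_le_mul_right h h6
    have := W.left_le a₀
    omega
  have := W.left_le a₀
  generalize Fintype.card Q = q at *
  interval_cases q <;> omega

lemma add_ne_univ_of_card_eq_two (W : CosetWeights h s t x) (hs : #(supp s) = 2) :
    supp s + supp t ≠ univ := by
  intro huniv
  obtain ⟨a₀, ha₀, hlarge, hmax⟩ := W.exists_max
  obtain ⟨a₁, ha₁, hne⟩ := exists_mem_ne W.two_le_card a₀
  have hle := hmax a₁ ha₁
  have hA : supp s = {a₁, a₀} :=
    (eq_of_subset_of_card_le (by simp [insert_subset_iff, ha₀, mem_supp.1 ha₁])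
      (by rw [hs, card_pair hne])).symm
  have hsum : ∑ a, s a = s a₀ + s a₁ := by rw [← sum_supp, hA, sum_pair hne, add_comm]
  have hD := W.sum_tsub_add_one_le
  rw [hA, sum_pair hne, add_comm (h - s a₁)] at hD
  have hmin : ∀ a ∈ supp s, s a₁ ≤ s a := by simp [hA, hle]
  have hcard := W.card_supp_add_one_le
  rw [← W.supp_add_supp, huniv, card_univ, hs] at hcard
  by_cases ht : supp t = univ
  · obtain ⟨b, hb, hb₁⟩ := W.exists_eq_of_card_eq_two hs ha₀ (mem_supp.1 ha₁) hne.symm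
      (W.exists_eq_of_supp_eq_univ hlarge hD hle hsum ht)
    have := W.tsub_lt_add_tsub_of_erase_subset hlarge hD hsum (b := b) (by simp [ht])
    have := W.add_eq a₁ b (mem_supp.1 ha₁) (by simp [← mem_supp, ht])
    omega
  · obtain ⟨b, hb⟩ : ∃ b, b ∉ supp t := by simpa [eq_univ_iff_forall] using ht
    have hB : supp t = univ.erase b :=
      eq_of_subset_of_card_le (by simp [subset_erase, hb])
        (by rw [card_erase_of_mem (mem_univ b), card_univ]; omega)
    have := W.tsub_lt_add_tsub_of_erase_subset hlarge hD hsum hB.superset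
    have := W.min_le_of_mem hmin (huniv ▸ mem_univ (a₀ + b))
    rw [mem_supp] at hb
    omega

lemma add_ne_univ (W : CosetWeights h s t x) : supp s + supp t ≠ univ := by
  obtain hs | hs := W.two_le_card.eq_or_lt
  · exact W.add_ne_univ_of_card_eq_two hs.symm
  · exact W.add_ne_univ_of_three_le hs

lemma exists_mem_supp_right_iff (W : CosetWeights h s t x)
    (hx : #(supp x) + 1 = Fintype.card Q) : ∃ z, ∀ b, b ∈ supp t ↔ z - b ∉ supp s := by
  obtain ⟨z, hz⟩ : ∃ z, (supp x)ᶜ = {z} :=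
    card_eq_one.1 (by have := card_add_card_compl (supp x); omega)
  have hsub : (supp s).image (z - ·) ⊆ (supp t)ᶜ := by
    intro b hb
    obtain ⟨a, ha, rfl⟩ := mem_image.1 hb
    rw [mem_compl]
    intro hb
    have hzx : z ∈ (supp x)ᶜ := hz ▸ mem_singleton_self z
    rw [mem_compl, ← W.supp_add_supp] at hzx
    exact hzx (mem_add.2 ⟨a, ha, z - a, hb, add_sub_cancel a z⟩)
  have hcard := W.card_supp_add_one_le
  have heq := eq_of_subset_of_card_le hsub (by
    rw [card_image_of_injective _ sub_right_injective]
    have := card_add_card_compl (supp t)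
    omega)
  refine ⟨z, fun b => ?_⟩
  rw [← not_iff_not, not_not, ← mem_compl, ← heq, mem_image]
  exact ⟨fun ⟨a, ha, hab⟩ => by rwa [← hab, sub_sub_cancel], fun hb => ⟨_, hb, sub_sub_cancel z b⟩⟩

lemma card_compl_supp_of_mem_iff {z : Q} (hz : ∀ b, b ∈ supp t ↔ z - b ∉ supp s) :
    #(supp t)ᶜ = #(supp s) :=
  card_nbij' (z - ·) (z - ·) (by simp [hz, Set.MapsTo, -mem_supp])
    (by simp [hz, Set.MapsTo, -mem_supp]) (fun b _ => sub_sub_cancel z b)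
    fun a _ => sub_sub_cancel z a

lemma exists_ne_of_ne {z : Q} (hz : ∀ b, b ∈ supp t ↔ z - b ∉ supp s)
    (hgap : ∀ y : Q, y ≠ 0 → #(supp s) + 2 ≤ #(supp s + {0, y})) {c : Q} (hc : c ≠ z) (a₁ : Q) :
    ∃ a ∈ supp s, a ≠ a₁ ∧ c - a ∈ supp t := by
  have hcard := card_sdiff_vadd_add_card (supp s) (c - z)
  have := hgap (c - z) (sub_ne_zero.2 hc)
  obtain ⟨a, ha, hne⟩ := exists_mem_ne (s := supp s \ ((c - z) +ᵥ supp s)) (by omega) a₁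
  obtain ⟨has, hac⟩ := mem_sdiff.1 ha
  refine ⟨a, has, hne, (hz _).2 fun hmem => hac ?_⟩
  exact mem_vadd_finset.2 ⟨_, hmem, by rw [vadd_eq_add]; abel⟩

-- When `z` is the only point outside the sum, every other point has at least two representations by
-- `hgap`, hence one whose first summand is not `a₁`.
lemma sum_compl_tsub_le (W : CosetWeights h s t x) {z : Q} (hz : ∀ b, b ∈ supp t ↔ z - b ∉ supp s)
    (hgap : ∀ y : Q, y ≠ 0 → #(supp s) + 2 ≤ #(supp s + {0, y})) {a₀ a₁ a₂ : Q}
    (ha₀ : a₀ ∈ supp s) (hmin : ∀ a ∈ (supp s).erase a₁, s a₂ ≤ s a) :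
    ∑ b ∈ (supp t)ᶜ, (h - x (a₀ + b)) ≤ (#(supp t)ᶜ - 1) * (h - s a₂) + h := by
  have hmem : z - a₀ ∈ (supp t)ᶜ := by simp [hz, ha₀]
  rw [← sum_erase_add _ _ hmem, ← card_erase_of_mem hmem]
  refine add_le_add ?_ (Nat.sub_le _ _)
  refine (sum_le_card_nsmul _ _ (h - s a₂) fun b hb => ?_).trans_eq (smul_eq_mul _ _)
  obtain ⟨a, ha, hne, hb⟩ := exists_ne_of_ne hz hgap (c := a₀ + b)
    (fun hb' => (mem_erase.1 hb).1 (by rw [← hb', add_sub_cancel_left])) a₁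
  have hle := W.left_le_add a _ (mem_supp.1 ha) (mem_supp.1 hb)
  rw [add_sub_cancel] at hle
  have := hmin a (mem_erase.2 ⟨hne, ha⟩)
  omega

lemma exists_max_min_min (W : CosetWeights h s t x) :
    ∃ a₀ a₁ a₂, 0 < s a₀ ∧ h < 2 * s a₀ ∧ (∀ a ∈ (supp s).erase a₁, s a₂ ≤ s a) ∧
      h - s a₀ ≤ h - s a₂ ∧ h - s a₂ ≤ h - s a₁ ∧
      (#(supp s) - 2) * (h - s a₀) + (h - s a₂) + (h - s a₁) ≤ ∑ a ∈ supp s, (h - s a) := by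
  obtain ⟨a₀, ha₀, hlarge, hmax⟩ := W.exists_max
  obtain ⟨a₁, ha₁, hmin₁⟩ := exists_min_image (supp s) s W.nonempty_left
  obtain ⟨a₂, ha₂, hmin₂⟩ := exists_min_image ((supp s).erase a₁) s
    (card_pos.1 (by rw [card_erase_of_mem ha₁]; exact Nat.sub_pos_of_lt W.two_le_card))
  obtain ⟨hne, ha₂⟩ := mem_erase.1 ha₂
  refine ⟨a₀, a₁, a₂, ha₀, hlarge, hmin₂, Nat.sub_le_sub_left (hmax a₂ ha₂) h,
    Nat.sub_le_sub_left (hmin₁ a₂ ha₂) h, ?_⟩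
  have hsub : {a₂, a₁} ⊆ supp s := insert_subset_iff.2 ⟨ha₂, singleton_subset_iff.2 ha₁⟩
  simpa [card_sdiff_of_subset hsub, card_pair hne, sum_pair hne, add_assoc] using
    card_sdiff_mul_add_sum_tsub_le (h := h) hmax hsub

lemma card_ne_of_card_eq_three (W : CosetWeights h s t x) (hs : #(supp s) = 3)
    (hgap : ∀ y : Q, y ≠ 0 → #(supp s) + 2 ≤ #(supp s + {0, y})) :
    #(supp x) + 1 ≠ Fintype.card Q := by
  intro hx
  obtain ⟨z, hz⟩ := W.exists_mem_supp_right_iff hx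
  obtain ⟨a₀, a₁, a₂, ha₀, hlarge, hmin, hle₂, hle₁, hD⟩ := W.exists_max_min_min
  have hr := W.sum_compl_tsub_le hz hgap (mem_supp.2 ha₀) hmin
  have hw := W.card_filter_lt_mul_le hlarge subset_rfl
  have hR := W.card_mul_le_of_subset ha₀ subset_rfl
  have hrt : ∑ b ∈ (supp t)ᶜ, (t b + (h - x (a₀ + b))) = ∑ b ∈ (supp t)ᶜ, (h - x (a₀ + b)) :=
    sum_congr rfl fun b hb => by simpa using hb
  have hsum := W.sum_tsub_add_sum_left
  have hdef := W.sum_tsub_add_one_le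
  have hcompl := card_add_card_compl (supp t)
  have hq := W.three_mul_card_le
  rw [card_compl_supp_of_mem_iff hz] at hcompl hr
  rw [hs] at *
  rw [hrt] at hw
  have hqh := Nat.mul_le_mul_right h (show 7 ≤ Fintype.card Q by omega)
  have hw₃ : #{b ∈ supp t | x (a₀ + b) < h} < 3 := by
    by_contra! h3
    have := Nat.mul_le_mul_right h h3
    rw [← hcompl, add_mul] at hw
    omega
  have := Nat.mul_le_mul_right (h - s a₀) (Nat.le_of_lt_succ hw₃)
  omega

lemma card_ne_of_four_le (W : CosetWeights h s t x) (hs : 4 ≤ #(supp s))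
    (hgap : ∀ y : Q, y ≠ 0 → #(supp s) + 2 ≤ #(supp s + {0, y})) :
    #(supp x) + 1 ≠ Fintype.card Q := by
  intro hx
  obtain ⟨z, hz⟩ := W.exists_mem_supp_right_iff hx
  obtain ⟨a₀, a₁, a₂, ha₀, -, hmin, hle₂, hle₁, hD⟩ := W.exists_max_min_min
  have hr := W.sum_compl_tsub_le hz hgap (mem_supp.2 ha₀) hmin
  have hR := W.card_mul_le_of_subset ha₀ subset_rfl
  have hdef := W.sum_tsub_add_one_le
  have hfew : #{b ∈ supp t | x (a₀ + b) < h} ≤ #(supp t) := card_filter_le _ _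
  have hcompl := card_add_card_compl (supp t)
  have hq := W.three_mul_card_le
  rw [card_compl_supp_of_mem_iff hz] at hcompl hr
  obtain ⟨u, hu⟩ := Nat.exists_eq_add_of_le' hs
  obtain ⟨E, hE⟩ := Nat.exists_eq_add_of_le hle₂
  rw [hu] at hr hD hcompl hq
  simp only [Nat.add_succ_sub_one, show u + 4 - 2 = u + 2 by omega] at hr hD
  generalize h - s a₀ = D, #{b ∈ supp t | x (a₀ + b) < h} = w, h - s a₂ = D₂, h - s a₁ = D₁,
    #(supp t) = m, ∑ b ∈ (supp t)ᶜ, (h - x (a₀ + b)) = R at *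
  subst hE
  rw [← hcompl] at hq hR
  have hwD : w * D ≤ m * D := Nat.mul_le_mul_right D hfew
  have hD' : (u + 4) * D + 2 * E + 1 ≤ h := by linarith
  have hmD : 4 * ((m + u + 3) * D) ≤ (u + 4) * ((m + u + 3) * D) :=
    Nat.mul_le_mul_right _ (by omega)
  have hmE : 2 * ((u + 3) * E) ≤ (m + u + 3) * E := by
    rw [← mul_assoc]
    exact Nat.mul_le_mul_right _ (by omega)
  have hh : 10 * h ≤ (m + (u + 4)) * h := Nat.mul_le_mul_right _ (by omega)
  have hmul := Nat.mul_le_mul_left (m + u + 3) hD'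
  nlinarith

lemma card_add_two_le (W : CosetWeights h s t x) (hs : 3 ≤ #(supp s))
    (hgap : ∀ y : Q, y ≠ 0 → #(supp s) + 2 ≤ #(supp s + {0, y})) :
    #(supp x) + 2 ≤ Fintype.card Q := by
  have hlt : #(supp x) < Fintype.card Q :=
    (card_lt_iff_ne_univ _).2 (W.supp_add_supp ▸ W.add_ne_univ)
  have hne : #(supp x) + 1 ≠ Fintype.card Q := by
    obtain hs | hs := hs.eq_or_lt
    · exact W.card_ne_of_card_eq_three hs.symm hgap
    · exact W.card_ne_of_four_le hs hgap
  omega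

end CosetWeights

end Defect

/-! ### Weights supported on progressions -/

section SumProgressions

variable {Q : Type*} [AddCommGroup Q] {A : Finset Q} {a b d : Q} {u v : ℕ}

lemma exists_card_add_pair_le_of_card_eq_two [DecidableEq Q] (hA : #A = 2) :
    ∃ y, y ≠ 0 ∧ #(A + {0, y}) ≤ #A + 1 := by
  obtain ⟨a, b, hab, rfl⟩ := card_eq_two.1 hA
  have hsub : ({a, b} + {0, b - a} : Finset Q) ⊆ {a, b, b + (b - a)} := by
    rw [insert_eq, union_add, singleton_add, singleton_add]
    simp [vadd_finset_insert]
  exact ⟨b - a, sub_ne_zero.2 hab.symm, hA ▸ (card_le_card hsub).trans card_le_three⟩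

variable [DecidableEq Q]

lemma add_nsmul_mem_progression {i k : ℕ} (hi : i < k) : a + i • d ∈ progression a d k :=
  mem_image_of_mem _ (mem_range.2 hi)

lemma progression_add_progression (a b d : Q) (u v : ℕ) :
    progression a d (u + 1) + progression b d (v + 1) = progression (a + b) d (u + v + 1) := by
  induction v with
  | zero =>
    rw [zero_add, progression_one, add_comm, singleton_add, add_zero, progression, progression,
      ← image_vadd, image_image]
    simp only [Function.comp_def, vadd_eq_add, add_comm a b, add_assoc]
  | succ v ih =>
    rw [progression_succ b d v.succ_ne_zero, ← add_assoc, ih, ← add_assoc u,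
      progression_succ _ d (u + v).succ_ne_zero]

variable [Fintype Q]

omit [DecidableEq Q] in
lemma nsmul_injOn (hd : AddSubgroup.zmultiples d = ⊤) :
    Set.InjOn (fun i : ℕ => i • d) (Set.Iio (Fintype.card Q)) := by
  rw [← Nat.card_eq_fintype_card,
    ← addOrderOf_eq_card_of_forall_mem_zmultiples fun x => hd ▸ AddSubgroup.mem_top x]
  exact nsmul_injOn_Iio_addOrderOf

lemma sum_progression (hd : AddSubgroup.zmultiples d = ⊤) {k : ℕ} (hk : k ≤ Fintype.card Q)
    (a : Q) (f : Q → ℕ) : ∑ c ∈ progression a d k, f c = ∑ i ∈ range k, f (a + i • d) :=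
  sum_image fun i hi j hj hij => nsmul_injOn hd (by grind) (by grind) (add_left_cancel hij)

lemma card_progression (hd : AddSubgroup.zmultiples d = ⊤) {k : ℕ} (hk : k ≤ Fintype.card Q)
    (a : Q) : #(progression a d k) = k := by
  simpa using sum_progression hd hk a 1

lemma lt_card_of_progression_ne_univ (hd : AddSubgroup.zmultiples d = ⊤) {k : ℕ}
    (h : progression a d k ≠ univ) : k < Fintype.card Q := by
  by_contra! hk
  have hsub : progression a d (Fintype.card Q) ⊆ progression a d k :=
    image_subset_image (range_subset_range.2 hk)
  rw [eq_univ_of_card _ (card_progression hd le_rfl a), univ_subset_iff] at hsub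
  exact h hsub

lemma uniqueAdd_progression (hd : AddSubgroup.zmultiples d = ⊤) (huv : u + v < Fintype.card Q)
    {i j : ℕ} (hi : i ≤ u) (hj : j ≤ v) (hij : i + j = 0 ∨ i + j = u + v) :
    UniqueAdd (progression a d (u + 1)) (progression b d (v + 1)) (a + i • d) (b + j • d) := by
  intro a' b' ha hb hab
  obtain ⟨k, hk, rfl⟩ := mem_image.1 ha
  obtain ⟨l, hl, rfl⟩ := mem_image.1 hb
  rw [mem_range] at hk hl
  rw [add_add_add_comm, add_add_add_comm a (i • d), ← add_nsmul, ← add_nsmul] at hab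
  have := nsmul_injOn hd (by grind) (by grind) (add_left_cancel hab)
  obtain ⟨rfl, rfl⟩ : k = i ∧ l = j := by omega
  exact ⟨rfl, rfl⟩

end SumProgressions

section CosetWeights

variable {Q : Type*} [AddCommGroup Q] [Fintype Q] {h : ℕ} {s t x : Q → ℕ} {a b d : Q} {u v : ℕ}

namespace CosetWeights

lemma two_mul_card_le (W : CosetWeights h s t x) : 2 * #(supp s) ≤ Fintype.card Q := by
  have := W.three_mul_card_le
  have := W.two_le_card
  omega

lemma exists_card_add_pair_le (W : CosetWeights h s t x) (hE : ExpandsSubgroups (supp s)) :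
    ∃ y, y ≠ 0 ∧ #(supp s + {0, y}) ≤ #(supp s) + 1 := by
  obtain hs | hs := W.two_le_card.eq_or_lt
  · exact exists_card_add_pair_le_of_card_eq_two hs.symm
  by_contra! hgap
  have := W.card_supp_le
  have hcritical : IsCritical (supp s) (supp t) := by
    rw [IsCritical, add_comm (supp t) (supp s), W.supp_add_supp, add_comm #(supp t)]
    exact ⟨by omega, W.card_supp_add_one_le, W.card_add_two_le hs hgap⟩
  obtain ⟨y, hy, hle⟩ := exists_card_add_pair_le_of_isCritical W.isCauchySet hE W.two_mul_card_le
    W.two_le_card hcritical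
  exact (hgap y hy).not_ge hle

lemma exists_isAPWith (W : CosetWeights h s t x) (hE : ExpandsSubgroups (supp s)) :
    ∃ d, AddSubgroup.zmultiples d = ⊤ ∧ IsAPWith d (supp s) ∧ IsAPWith d (supp t) := by
  obtain ⟨d, hd₀, hle⟩ := W.exists_card_add_pair_le hE
  have hd := hE.zmultiples_eq_top W.two_mul_card_le hd₀ hle
  have hU : supp s ≠ univ := ne_univ_of_card_lt (by
    have := W.two_mul_card_le
    have := W.two_le_card
    omega)
  have hs := isAPWith_of_card_add_pair_le hd W.nonempty_left hU hle
  exact ⟨d, hd, hs, isAPWith_of_card_add_add_one_le hs W.two_le_card hd W.nonempty_right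
    W.add_ne_univ (W.supp_add_supp.symm ▸ W.card_supp_add_one_le)⟩

lemma intervalWeights (W : CosetWeights h s t x) (hd : AddSubgroup.zmultiples d = ⊤)
    (huv : u + v < Fintype.card Q) (hs : supp s = progression a d (u + 1))
    (ht : supp t = progression b d (v + 1)) :
    IntervalWeights h u v (fun i => s (a + i • d)) (fun j => t (b + j • d))
      (fun k => x (a + b + k • d)) := by
  have hus : #(supp s) = u + 1 := hs ▸ card_progression hd (by omega) a
  have hvt : #(supp t) = v + 1 := ht ▸ card_progression hd (by omega) b
  have hsums : ∑ c, s c = ∑ i ∈ range (u + 1), s (a + i • d) := by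
    rw [← sum_supp, hs, sum_progression hd (by omega)]
  have hsumt : ∑ c, t c = ∑ j ∈ range (v + 1), t (b + j • d) := by
    rw [← sum_supp, ht, sum_progression hd (by omega)]
  have hsumx : ∑ c, x c = ∑ k ∈ range (u + v + 1), x (a + b + k • d) := by
    rw [← sum_supp, ← W.supp_add_supp, hs, ht, progression_add_progression,
      sum_progression hd (by omega)]
  have hspos : ∀ i ≤ u, 0 < s (a + i • d) := fun i hi => by
    rw [← mem_supp, hs]
    exact add_nsmul_mem_progression (by omega)
  have htpos : ∀ j ≤ v, 0 < t (b + j • d) := fun j hj => by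
    rw [← mem_supp, ht]
    exact add_nsmul_mem_progression (by omega)
  have hadd : ∀ i j : ℕ, a + b + (i + j) • d = a + i • d + (b + j • d) := fun i j => by
    rw [add_nsmul, add_add_add_comm]
  refine ⟨?_, ?_, fun i _ => W.left_le _, fun j _ => W.right_le _, fun k => W.le _, ?_, ?_, ?_, ?_,
    by rw [← hsumx, ← hsums, ← hsumt, W.sum_add_one], ?_⟩
  · have := W.two_le_card
    omega
  · have := W.two_le_card
    have := W.card_supp_le
    omega
  all_goals try simp only [hadd]
  · exact fun i hi j hj => W.left_le_add _ _ (hspos i hi) (htpos j hj)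
  · exact fun i hi j hj => W.right_le_add _ _ (hspos i hi) (htpos j hj)
  · exact fun i hi j hj => W.add_eq _ _ (hspos i hi) (htpos j hj)
  · exact fun i _ j hj hsi => W.two_mul_add_ge _ _ hsi (htpos j hj)
  · have := W.card_mul_add_one_le
    rw [hus, hsums, add_one_mul] at this
    omega

lemma exists_uniqueAdd_of_eq_progression (W : CosetWeights h s t x)
    (hd : AddSubgroup.zmultiples d = ⊤) (hs : supp s = progression a d (u + 1))
    (ht : supp t = progression b d (v + 1)) :
    ∃ α ∈ supp s, ∃ β ∈ supp t, UniqueAdd (supp s) (supp t) α β ∧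
      ∀ c ∈ supp x, c ≠ α + β → x c = h := by
  have hx : supp x = progression (a + b) d (u + v + 1) := by
    rw [← W.supp_add_supp, hs, ht, progression_add_progression]
  have huv : u + v + 1 < Fintype.card Q :=
    lt_card_of_progression_ne_univ (a := a + b) hd (hx ▸ W.supp_add_supp ▸ W.add_ne_univ)
  have I := W.intervalWeights hd (by omega) hs ht
  suffices ∃ i ≤ u, ∃ j ≤ v, (i + j = 0 ∨ i + j = u + v) ∧
      ∀ k ≤ u + v, k ≠ i + j → x (a + b + k • d) = h by
    obtain ⟨i, hi, j, hj, hij, hfull⟩ := this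
    rw [hs, ht, hx]
    refine ⟨_, add_nsmul_mem_progression (Nat.lt_succ_of_le hi), _,
      add_nsmul_mem_progression (Nat.lt_succ_of_le hj),
      uniqueAdd_progression hd (by omega) hi hj hij, fun c hc hne => ?_⟩
    obtain ⟨k, hk, rfl⟩ := mem_image.1 hc
    refine hfull k (Nat.le_of_lt_succ (mem_range.1 hk)) ?_
    rintro rfl
    rw [add_nsmul, add_add_add_comm] at hne
    exact hne rfl
  obtain h₀ | hlast := I.eq_zero_or_eq_last
  · refine ⟨u, le_rfl, v, le_rfl, Or.inr rfl, fun k hk hne => ?_⟩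
    obtain rfl | hk₀ := Nat.eq_zero_or_pos k
    · exact h₀
    · exact I.eq_of_pos_of_lt hk₀ (by omega)
  · refine ⟨0, by simp, 0, by simp, Or.inl rfl, fun k hk hne => ?_⟩
    obtain rfl | hk' := hk.eq_or_lt
    · exact hlast
    · exact I.eq_of_pos_of_lt (by omega) hk'

lemma exists_uniqueAdd (W : CosetWeights h s t x) (hd : AddSubgroup.zmultiples d = ⊤)
    (hs : IsAPWith d (supp s)) (ht : IsAPWith d (supp t)) :
    ∃ α ∈ supp s, ∃ β ∈ supp t, UniqueAdd (supp s) (supp t) α β ∧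
      ∀ c ∈ supp x, c ≠ α + β → x c = h := by
  obtain ⟨a, k, hk, hs⟩ := hs
  obtain ⟨b, l, hl, ht⟩ := ht
  obtain ⟨u, rfl⟩ : ∃ u, k = u + 1 := Nat.exists_eq_add_of_le' (hk ▸ W.nonempty_left.card_pos)
  obtain ⟨v, rfl⟩ : ∃ v, l = v + 1 := Nat.exists_eq_add_of_le' (hl ▸ W.nonempty_right.card_pos)
  exact W.exists_uniqueAdd_of_eq_progression hd hs ht

lemma card_mul_le_sum_erase_add_sum_erase (W : CosetWeights h s t x) {α β : Q} (hα : α ∈ supp s)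
    (hβ : β ∈ supp t) (hfull : ∀ c ∈ supp x, c ≠ α + β → x c = h)
    (hle : s α + t β ≤ x (α + β) + 1) :
    #((supp s).erase α) * h + #((supp t).erase β) * h ≤
      ∑ a ∈ (supp s).erase α, s a + ∑ b ∈ (supp t).erase β, t b := by
  have hγ : α + β ∈ supp x := W.supp_add_supp ▸ add_mem_add hα hβ
  have hcauchy := W.isCauchySet (supp t) ⟨β, hβ⟩ (add_comm (supp s) _ ▸ W.add_ne_univ)
  rw [add_comm (supp t), W.supp_add_supp] at hcauchy
  have hsumx : ∑ c ∈ (supp x).erase (α + β), x c = #((supp x).erase (α + β)) * h := by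
    rw [← smul_eq_mul]
    exact sum_eq_card_nsmul fun c hc => hfull c (mem_of_mem_erase hc) (ne_of_mem_erase hc)
  have hcard : #((supp s).erase α) + #((supp t).erase β) ≤ #((supp x).erase (α + β)) := by
    rw [card_erase_of_mem hα, card_erase_of_mem hβ, card_erase_of_mem hγ]
    have := card_pos.2 ⟨α, hα⟩
    have := card_pos.2 ⟨β, hβ⟩
    omega
  have hmul := Nat.mul_le_mul_right h hcard
  rw [add_mul] at hmul
  have := W.sum_add_one
  rw [← sum_supp x, ← sum_supp s, ← sum_supp t, ← add_sum_erase _ _ hα, ← add_sum_erase _ _ hβ,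
    ← add_sum_erase _ _ hγ] at this
  omega

lemma eq_of_ne_of_add_le (W : CosetWeights h s t x) {α β : Q} (hα : α ∈ supp s)
    (hβ : β ∈ supp t) (hfull : ∀ c ∈ supp x, c ≠ α + β → x c = h)
    (hle : s α + t β ≤ x (α + β) + 1) :
    (∀ a ∈ supp s, a ≠ α → s a = h) ∧ ∀ b ∈ supp t, b ≠ β → t b = h := by
  have hsum := W.card_mul_le_sum_erase_add_sum_erase hα hβ hfull hle
  have hs := sum_le_card_mul W.left_le ((supp s).erase α)
  have ht := sum_le_card_mul W.right_le ((supp t).erase β)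
  exact ⟨fun a ha hne => eq_of_card_mul_le_sum W.left_le (by omega) (mem_erase.2 ⟨hne, ha⟩),
    fun b hb hne => eq_of_card_mul_le_sum W.right_le (by omega) (mem_erase.2 ⟨hne, hb⟩)⟩

end CosetWeights

end CosetWeights

/-! ### Fibres of a surjective homomorphism -/

section Fibers

variable {G Q : Type*} [AddCommGroup G] [AddCommGroup Q] {π : G →+ Q} {S T : Finset G} {a b : Q}

/-- The part of a finite set that a homomorphism maps to a given point. -/
noncomputable def fiber (π : G →+ Q) (S : Finset G) (a : Q) : Finset G := {g ∈ S | π g = a}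

@[simp] lemma mem_fiber {g : G} : g ∈ fiber π S a ↔ g ∈ S ∧ π g = a := mem_filter

/-- The number of elements of a finite set over a given point, as a weight function. -/
noncomputable def fiberCard (π : G →+ Q) (S : Finset G) (a : Q) : ℕ := #(fiber π S a)

lemma fiberCard_pos : 0 < fiberCard π S a ↔ ∃ g ∈ S, π g = a := by
  simp [fiberCard, card_pos, Finset.Nonempty]

lemma supp_fiberCard [Fintype Q] (π : G →+ Q) (S : Finset G) :
    supp (fiberCard π S) = S.image π := by
  ext a
  rw [mem_supp, fiberCard_pos, mem_image]

lemma sum_fiberCard [Fintype Q] (π : G →+ Q) (S : Finset G) : ∑ a, fiberCard π S a = #S :=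
  (card_eq_sum_card_fiberwise fun _ _ => mem_coe.2 (mem_univ _)).symm

section Finite

variable [Fintype G]

lemma fiber_univ_zero : fiber π univ 0 = elems π.ker := by
  ext
  simp

lemma card_fiber_univ (hπ : Function.Surjective π) (a : Q) :
    #(fiber π univ a) = #(elems π.ker) := by
  rw [← fiber_univ_zero]
  exact AddMonoidHom.card_fiber_eq_of_mem_range π (hπ a) (hπ 0)

lemma fiberCard_le (hπ : Function.Surjective π) (S : Finset G) (a : Q) :
    fiberCard π S a ≤ #(elems π.ker) := by
  rw [← card_fiber_univ hπ a]
  exact card_le_card (filter_subset_filter _ (subset_univ S))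

lemma mem_of_fiberCard_eq (hπ : Function.Surjective π) {g : G}
    (h : fiberCard π S (π g) = #(elems π.ker)) : g ∈ S := by
  have hfull : fiber π S (π g) = fiber π univ (π g) :=
    eq_of_subset_of_card_le (filter_subset_filter _ (subset_univ S))
      (by rw [card_fiber_univ hπ, ← h, fiberCard])
  exact (mem_fiber.1 (hfull ▸ mem_fiber.2 ⟨mem_univ g, rfl⟩)).1

end Finite

variable [DecidableEq G]

lemma fiber_add_fiber_subset (π : G →+ Q) (S T : Finset G) (a b : Q) :
    fiber π S a + fiber π T b ⊆ fiber π (S + T) (a + b) := by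
  simp only [add_subset_iff, mem_fiber]
  rintro g ⟨hg, rfl⟩ g' ⟨hg', rfl⟩
  exact ⟨add_mem_add hg hg', map_add π g g'⟩

lemma fiber_add_of_uniqueAdd (h : UniqueAdd (S.image π) (T.image π) a b) :
    fiber π (S + T) (a + b) = fiber π S a + fiber π T b := by
  refine subset_antisymm (fun c hc => ?_) (fiber_add_fiber_subset π S T a b)
  obtain ⟨hc, hab⟩ := mem_fiber.1 hc
  obtain ⟨g, hg, g', hg', rfl⟩ := mem_add.1 hc
  rw [map_add] at hab
  have hunique := h (mem_image_of_mem π hg) (mem_image_of_mem π hg') hab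
  exact add_mem_add (mem_fiber.2 ⟨hg, hunique.1⟩) (mem_fiber.2 ⟨hg', hunique.2⟩)

lemma fiberCard_le_add_right (hb : 0 < fiberCard π T b) :
    fiberCard π S a ≤ fiberCard π (S + T) (a + b) :=
  (card_le_card_add_right (card_pos.1 hb)).trans (card_le_card (fiber_add_fiber_subset π S T a b))

lemma fiberCard_le_add_left (ha : 0 < fiberCard π S a) :
    fiberCard π T b ≤ fiberCard π (S + T) (a + b) :=
  (card_le_card_add_left (card_pos.1 ha)).trans (card_le_card (fiber_add_fiber_subset π S T a b))

lemma stabilizer_le_ker_of_subset_fiber {C : Finset G} (hC : C.Nonempty) (h : C ⊆ fiber π S a) :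
    stabilizer G C ≤ π.ker := fun k hk => by
  obtain ⟨g, hg⟩ := hC
  have hkg := (mem_fiber.1 (h ((mem_stabilizer_finset.1 hk g).2 hg))).2
  rwa [vadd_eq_add, map_add, (mem_fiber.1 (h hg)).2, add_eq_right] at hkg

lemma fiberCard_add_eq [Fintype G] (hπ : Function.Surjective π)
    (h : #(elems π.ker) < fiberCard π S a + fiberCard π T b) :
    fiberCard π (S + T) (a + b) = #(elems π.ker) := by
  rw [← card_fiber_univ hπ (a + b)]
  refine congr_arg card (subset_antisymm (filter_subset_filter _ (subset_univ _)) fun c hc => ?_)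
  refine fiber_add_fiber_subset π S T a b (mem_add_of_card_lt (U := fiber π univ a)
    (filter_subset_filter _ (subset_univ S)) (fun g hg => ?_) (by rwa [card_fiber_univ hπ]))
  rw [mem_fiber] at hc hg ⊢
  exact ⟨mem_univ _, by rw [map_sub, hc.2, hg.2, add_sub_cancel_right]⟩

end Fibers

section Preimages

variable {G Q : Type*} [AddCommGroup G] [Fintype G] [AddCommGroup Q] {π : G →+ Q} {Z : Finset Q}

/-- The full preimage of a finite set under a homomorphism from a finite group, as a finset. -/
noncomputable def preim (π : G →+ Q) (Z : Finset Q) : Finset G := {g | π g ∈ Z}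

@[simp] lemma mem_preim {g : G} : g ∈ preim π Z ↔ π g ∈ Z := by simp [preim]

lemma preim_zero : preim π {0} = elems π.ker := by
  ext
  simp

lemma preim_elems [Fintype Q] (K : AddSubgroup Q) : preim π (elems K) = elems (K.comap π) := by
  ext
  simp

lemma preim_add [DecidableEq G] (Z : Finset Q) (S : Finset G) :
    preim π Z + S = preim π (Z + S.image π) := by
  ext g
  rw [mem_preim, mem_add, mem_add]
  constructor
  · rintro ⟨g', hg', s, hs, rfl⟩
    exact ⟨π g', mem_preim.1 hg', π s, mem_image_of_mem π hs, (map_add π g' s).symm⟩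
  · rintro ⟨z, hz, z', hz', hsum⟩
    obtain ⟨s, hs, rfl⟩ := mem_image.1 hz'
    exact ⟨g - s, by rwa [mem_preim, map_sub, ← hsum, add_sub_cancel_right], s, hs,
      sub_add_cancel g s⟩

variable (hπ : Function.Surjective π)
include hπ

lemma card_preim (Z : Finset Q) : #(preim π Z) = #Z * #(elems π.ker) := by
  rw [card_eq_sum_card_fiberwise (f := π) (t := Z) fun g hg => mem_coe.2 (mem_preim.1 hg),
    ← smul_eq_mul]
  refine sum_eq_card_nsmul fun a ha => ?_
  rw [← card_fiber_univ hπ a]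
  congr 1
  ext g
  simp only [mem_filter, mem_preim, mem_fiber, mem_univ, true_and, and_iff_right_iff_imp]
  rintro rfl
  exact ha

lemma card_eq_card_mul_card_ker [Fintype Q] :
    Fintype.card G = Fintype.card Q * #(elems π.ker) := by
  rw [← card_univ, ← card_univ, ← card_preim hπ]
  congr 1
  ext
  simp

lemma preim_ne_univ [Fintype Q] : preim π Z ≠ univ ↔ Z ≠ univ := by
  simp only [ne_eq, eq_univ_iff_forall, mem_preim, hπ.forall]

end Preimages

section Divisibility

variable {G : Type*} [AddCommGroup G] [Fintype G] [DecidableEq G] {A B U : Finset G}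
  {H K : AddSubgroup G}

lemma card_elems_dvd_of_le_stabilizer (hK : K ≤ stabilizer G U) : #(elems K) ∣ #U := by
  have hU : preim (QuotientAddGroup.mk' K) (U.image (QuotientAddGroup.mk' K)) = U := by
    ext g
    rw [mem_preim, mem_image]
    refine ⟨?_, fun hg => ⟨g, hg, rfl⟩⟩
    rintro ⟨w, hw, hwg⟩
    have := (mem_stabilizer_finset.1 (hK (QuotientAddGroup.eq.1 hwg)) w).2 hw
    rwa [vadd_eq_add, add_right_comm, neg_add_cancel, zero_add] at this
  rw [← hU, card_preim (QuotientAddGroup.mk'_surjective K), QuotientAddGroup.ker_mk']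
  exact dvd_mul_left _ _

omit [DecidableEq G] in
lemma card_elems_add_le_of_dvd {m n : ℕ} (hm : #(elems K) ∣ m) (hn : #(elems K) ∣ n)
    (hmn : m < n) : m + #(elems K) ≤ n := by
  have := Nat.le_of_dvd (by omega) (Nat.dvd_sub hn hm)
  omega

-- `A + K`, where `K` is the stabilizer of `A + B`, is squeezed between `|H| / 2` and `|H|`; as the
-- order of `K` divides all these cardinalities, both gaps are multiples of `|K|`.
lemma card_add_bounds_of_stabilizer_le (hH : stabilizer G (A + B) ≤ H)
    (hA : #(elems H) < 2 * #A) (hB : B.Nonempty) (hAB : #(A + B) < #(elems H)) :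
    #(elems H) + 3 * #B ≤ 3 * #(A + B) ∧ #A + 2 * #B ≤ 2 * #(A + B) := by
  have hA₀ : A.Nonempty := card_pos.1 (by omega)
  have hkneser := kneser hA₀ hB
  set K := stabilizer G (A + B)
  have hAK : #A ≤ #(A + elems K) := card_le_card_add_right (elems_nonempty K)
  have hBK : #B ≤ #(B + elems K) := card_le_card_add_right (elems_nonempty K)
  have hKB : #(elems K) ≤ #(B + elems K) := card_le_card_add_left hB
  have hdvdA := card_elems_dvd_of_le_stabilizer (le_stabilizer_add_elems K A)
  have hdvdH := card_elems_dvd_of_le_stabilizer (hH.trans (le_stabilizer_elems H))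
  have hlower := card_elems_add_le_of_dvd hdvdH (hdvdA.mul_left 2) (by omega)
  have hupper := card_elems_add_le_of_dvd hdvdA hdvdH (by omega)
  omega

lemma fiberCard_add_bounds {Q : Type*} [AddCommGroup Q] {π : G →+ Q} {S T : Finset G} {a b : Q}
    (hS : #(elems π.ker) < 2 * fiberCard π S a) (hT : 0 < fiberCard π T b)
    (hST : fiberCard π (S + T) (a + b) < #(elems π.ker)) :
    #(elems π.ker) + 3 * fiberCard π T b ≤ 3 * fiberCard π (S + T) (a + b) ∧
      fiberCard π S a + 2 * fiberCard π T b ≤ 2 * fiberCard π (S + T) (a + b) := by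
  have hsub := fiber_add_fiber_subset π S T a b
  have hle := card_le_card hsub
  simp only [fiberCard] at hS hT hST ⊢
  have hS₀ : (fiber π S a).Nonempty := card_pos.1 (by omega)
  have hT₀ : (fiber π T b).Nonempty := card_pos.1 hT
  have := card_add_bounds_of_stabilizer_le
    (stabilizer_le_ker_of_subset_fiber (hS₀.add hT₀) hsub) hS hT₀ (hle.trans_lt hST)
  omega

end Divisibility

/-! ### Fragments and hyper-atoms -/

section HyperAtoms

variable {G Q : Type*} [AddCommGroup G] [Fintype G] [DecidableEq G] {S X : Finset G}

lemma isFragment_one_iff :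
    IsFragment 1 S X ↔ X.Nonempty ∧ X + S ≠ univ ∧ #(X + S) - #X = kappa 1 S := by
  have hpos : 0 < Fintype.card G := Fintype.card_pos
  rw [IsFragment, Nat.card_eq_fintype_card, Nat.le_sub_one_iff_lt hpos, card_lt_iff_ne_univ,
    Nat.one_le_iff_ne_zero, card_ne_zero]

lemma kappa_one_le (hX : X.Nonempty) (hXS : X + S ≠ univ) : kappa 1 S ≤ #(X + S) - #X := by
  have hcard : 1 ≤ #X ∧ #(X + S) ≤ Nat.card G - 1 := by
    rw [Nat.card_eq_fintype_card, Nat.le_sub_one_iff_lt Fintype.card_pos, card_lt_iff_ne_univ]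
    exact ⟨hX.card_pos, hXS⟩
  rw [kappa, if_pos ⟨X, hcard⟩]
  exact Nat.sInf_le ⟨X, hcard.1, hcard.2, rfl⟩

lemma isFragment_elems_of_isHyperAtom {H : AddSubgroup G} (hH : IsHyperAtom S H) :
    IsFragment 1 S (elems H) := by
  obtain ⟨⟨HF, hHF, hfrag⟩, -⟩ := hH
  rwa [coe_injective (hHF.trans (coe_elems H).symm)] at hfrag

variable [AddCommGroup Q] [Fintype Q] {π : G →+ Q} (hπ : Function.Surjective π)
include hπ

lemma isFragment_one_preim_iff {Z : Finset Q} :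
    IsFragment 1 S (preim π Z) ↔ Z.Nonempty ∧ Z + S.image π ≠ univ ∧
      (#(Z + S.image π) - #Z) * #(elems π.ker) = kappa 1 S := by
  rw [isFragment_one_iff, preim_add, preim_ne_univ hπ, card_preim hπ, card_preim hπ,
    ← Nat.sub_mul, ← card_pos, card_preim hπ, Nat.mul_pos_iff_of_pos_right (card_elems_pos _),
    card_pos]

lemma kappa_one_le_mul {Z : Finset Q} (hZ : Z.Nonempty) (hZS : Z + S.image π ≠ univ) :
    kappa 1 S ≤ (#(Z + S.image π) - #Z) * #(elems π.ker) := by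
  have hne : (preim π Z).Nonempty :=
    card_pos.1 (card_preim hπ Z ▸ Nat.mul_pos hZ.card_pos (card_elems_pos _))
  have := kappa_one_le hne (by rwa [preim_add, preim_ne_univ hπ])
  rwa [preim_add, card_preim hπ, card_preim hπ, ← Nat.sub_mul] at this

variable (hS : S.Nonempty) (hfrag : IsFragment 1 S (elems π.ker))

include hfrag

lemma image_ne_univ_and_kappa_one_eq :
    S.image π ≠ univ ∧ kappa 1 S = (#(S.image π) - 1) * #(elems π.ker) := by
  rw [← preim_zero, isFragment_one_preim_iff hπ, singleton_zero, zero_add, card_zero] at hfrag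
  exact ⟨hfrag.2.1, hfrag.2.2.symm⟩

include hS in
lemma isCauchySet_image : IsCauchySet (S.image π) := fun Z hZ hZS => by
  have hle := kappa_one_le_mul hπ hZ hZS
  rw [(image_ne_univ_and_kappa_one_eq hπ hfrag).2] at hle
  have := Nat.le_of_mul_le_mul_right hle (card_elems_pos _)
  have : #Z ≤ #(Z + S.image π) := card_le_card_add_right (hS.image π)
  omega

omit [Fintype Q] in
include hS in
lemma card_image_mul_card_ker_add_one_le :
    #(S.image π) * #(elems π.ker) + 1 ≤ #S + #(elems π.ker) := by
  have := Fintype.ofSurjective π hπ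
  obtain ⟨hne, hkappa⟩ := image_ne_univ_and_kappa_one_eq hπ hfrag
  have hSne : S ≠ univ := fun h => hne (by rw [h, image_univ_of_surjective hπ])
  have hle := kappa_one_le (singleton_nonempty (0 : G)) (S := S)
    (by rwa [singleton_zero, zero_add])
  rw [hkappa, singleton_zero, zero_add, card_zero, Nat.sub_mul, one_mul] at hle
  have := hS.card_pos
  omega

omit [Fintype Q] in
lemma two_le_card_image (h0 : 0 ∈ S) (hgen : AddSubgroup.closure (S : Set G) = ⊤) :
    2 ≤ #(S.image π) := by
  have := Fintype.ofSurjective π hπ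
  by_contra! hlt
  have h0' : (0 : Q) ∈ S.image π := mem_image.2 ⟨0, h0, map_zero π⟩
  have himage := card_le_one.1 (Nat.le_of_lt_succ hlt)
  have hker : π.ker = ⊤ := by
    rw [← top_le_iff, ← hgen, AddSubgroup.closure_le]
    exact fun g hg => himage _ (mem_image_of_mem π hg) _ h0'
  refine (image_ne_univ_and_kappa_one_eq hπ hfrag).1 (eq_univ_iff_forall.2 fun z => ?_)
  obtain ⟨g, rfl⟩ := hπ z
  rwa [π.mem_ker.1 (hker ▸ AddSubgroup.mem_top g)]

omit [Fintype G] hfrag in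
include hS in
-- A subgroup of the quotient violating the inequality would pull back to a larger fragment.
lemma expandsSubgroups_image [Finite G] (hH : IsHyperAtom S π.ker) :
    ExpandsSubgroups (S.image π) := by
  have := Fintype.ofFinite G
  intro K hK hKS
  have hfrag := isFragment_elems_of_isHyperAtom hH
  have hcauchy := isCauchySet_image hπ hS hfrag _ (elems_nonempty K) hKS
  by_contra! hlt
  have hfragK : IsFragment 1 S (elems (K.comap π)) := by
    rw [← preim_elems, isFragment_one_preim_iff hπ,
      (image_ne_univ_and_kappa_one_eq hπ hfrag).2]
    refine ⟨elems_nonempty K, hKS, ?_⟩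
    congr 1
    omega
  have hmax := hH.2 _ _ (coe_elems _) hfragK
  rw [natCard_eq_card_elems, natCard_eq_card_elems, ← preim_elems, card_preim hπ] at hmax
  have := Nat.mul_le_mul_right #(elems π.ker) (two_le_card_elems hK)
  have := card_elems_pos π.ker
  omega

end HyperAtoms

/-! ### The critical pair and its quotient -/

section Quotient

variable {G Q : Type*} [AddCommGroup G] [Fintype G] [AddCommGroup Q] {π : G →+ Q}
  {S T U : Finset G} {α β γ : Q}

lemma quasiPeriodic_of_fiberCard_eq (hπ : Function.Surjective π)
    (hfull : ∀ g ∈ S, π g ≠ α → fiberCard π S (π g) = #(elems π.ker)) :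
    QuasiPeriodic (π.ker : Set G) (S : Set G) := by
  obtain ⟨y, rfl⟩ := hπ α
  have mem_coset {g : G} : g ∈ ({y} : Set G) + (π.ker : Set G) ↔ π g = π y := by
    rw [Set.singleton_add, Set.image_add_left, Set.mem_preimage, SetLike.mem_coe,
      AddMonoidHom.mem_ker, map_add, map_neg, neg_add_eq_zero, eq_comm]
  refine ⟨y, subset_antisymm ?_ fun g hg => ⟨g, hg, 0, π.ker.zero_mem, add_zero g⟩⟩
  rintro _ ⟨w, ⟨hw, hwy⟩, k, hk, rfl⟩
  have hwk : π (w + k) = π w := by rw [map_add, π.mem_ker.1 hk, add_zero]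
  rw [mem_coset] at hwy
  refine ⟨mem_of_fiberCard_eq hπ ?_, ?_⟩
  · rw [hwk]
    exact hfull w hw hwy
  · rwa [mem_coset, hwk]

variable [DecidableEq G]

lemma stabilizer_fiber_eq_bot (hπ : Function.Surjective π) (hU : IsAperiodic U)
    (hfull : ∀ g ∈ U, π g ≠ γ → fiberCard π U (π g) = #(elems π.ker))
    (hne : (fiber π U γ).Nonempty) : stabilizer G (fiber π U γ) = ⊥ := by
  refine (AddSubgroup.eq_bot_iff_forall _).2 fun g hg => hU g ?_
  have hker := stabilizer_le_ker_of_subset_fiber hne subset_rfl hg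
  refine eq_of_subset_of_card_le ?_ (by rw [add_singleton, card_vadd_finset])
  rw [add_singleton]
  rintro _ hw'
  obtain ⟨w, hw, rfl⟩ := mem_vadd_finset.1 hw'
  by_cases hwγ : π w = γ
  · have := (mem_stabilizer_finset.1 hg w).2 (mem_fiber.2 ⟨hw, hwγ⟩)
    rw [op_vadd_eq_add, add_comm]
    exact (mem_fiber.1 this).1
  · refine mem_of_fiberCard_eq hπ ?_
    rw [op_vadd_eq_add, map_add, π.mem_ker.1 hker, add_zero]
    exact hfull w hw hwγ

lemma three_mul_card_image_le [Fintype Q] (hπ : Function.Surjective π)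
    (hS : #(S.image π) * #(elems π.ker) + 1 ≤ #S + #(elems π.ker)) (hST : #S ≤ #T)
    (hcard : #(S + T) + 1 = #S + #T) (hle : 3 * #(S + T) ≤ 2 * Nat.card G + 2) :
    3 * #(S.image π) ≤ Fintype.card Q + 2 := by
  rw [Nat.card_eq_fintype_card, card_eq_card_mul_card_ker hπ] at hle
  by_contra! hlt
  have := Nat.mul_le_mul_right #(elems π.ker) hlt
  rw [Nat.succ_mul, add_mul, mul_assoc] at this
  omega

lemma cosetWeights_fiberCard [Fintype Q] (hπ : Function.Surjective π) (h0 : 0 ∈ S)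
    (hgen : AddSubgroup.closure (S : Set G) = ⊤) (hfrag : IsFragment 1 S (elems π.ker))
    (hST : #S ≤ #T) (hcard : #(S + T) + 1 = #S + #T) (hle : 3 * #(S + T) ≤ 2 * Nat.card G + 2) :
    CosetWeights #(elems π.ker) (fiberCard π S) (fiberCard π T) (fiberCard π (S + T)) := by
  have hS := card_image_mul_card_ker_add_one_le hπ ⟨0, h0⟩ hfrag
  exact {
    pos := card_elems_pos _
    left_le := fiberCard_le hπ S
    right_le := fiberCard_le hπ T
    le := fiberCard_le hπ (S + T)
    left_le_add := fun a b _ hb => fiberCard_le_add_right hb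
    right_le_add := fun a b ha _ => fiberCard_le_add_left ha
    add_eq := fun a b _ _ h => fiberCard_add_eq hπ h
    three_mul_add_ge := fun a b ha hb hab => (fiberCard_add_bounds ha hb hab).1
    two_mul_add_ge := fun a b ha hb hab => (fiberCard_add_bounds ha hb hab).2
    exists_add := fun c hc => by
      obtain ⟨g, hg, rfl⟩ := fiberCard_pos.1 hc
      obtain ⟨a, ha, b, hb, rfl⟩ := mem_add.1 hg
      exact ⟨π a, π b, fiberCard_pos.2 ⟨a, ha, rfl⟩, fiberCard_pos.2 ⟨b, hb, rfl⟩,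
        (map_add π a b).symm⟩
    sum_add_one := by simpa only [sum_fiberCard] using hcard
    three_mul_sum_le := by
      rwa [sum_fiberCard, ← card_eq_card_mul_card_ker hπ, ← Nat.card_eq_fintype_card]
    card_mul_add_one_le := by rwa [sum_fiberCard, supp_fiberCard]
    sum_left_le := by rwa [sum_fiberCard, sum_fiberCard]
    two_le_card := by
      rw [supp_fiberCard]
      exact two_le_card_image hπ hfrag h0 hgen
    three_mul_card_le := by
      rw [supp_fiberCard]
      exact three_mul_card_image_le hπ hS hST hcard hle
    isCauchySet := by
      rw [supp_fiberCard]
      exact isCauchySet_image hπ ⟨0, h0⟩ hfrag }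

-- Only one coset meets `S + T` in a proper part, and that part is an aperiodic sum of two fibres.
-- Kneser's theorem bounds its size from below, which leaves no room for another incomplete fibre.
lemma quasiPeriodic_of_uniqueAdd [Fintype Q] (hπ : Function.Surjective π)
    (W : CosetWeights #(elems π.ker) (fiberCard π S) (fiberCard π T) (fiberCard π (S + T)))
    (hap : IsAperiodic (S + T)) (hα : α ∈ S.image π) (hβ : β ∈ T.image π)
    (hunique : UniqueAdd (S.image π) (T.image π) α β)
    (hfull : ∀ c ∈ (S + T).image π, c ≠ α + β → fiberCard π (S + T) c = #(elems π.ker)) :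
    QuasiPeriodic (π.ker : Set G) (S : Set G) ∧ QuasiPeriodic (π.ker : Set G) (T : Set G) := by
  simp only [← supp_fiberCard] at hα hβ hfull
  have hfiber := fiber_add_of_uniqueAdd hunique
  have hSα : (fiber π S α).Nonempty := by rwa [mem_supp, fiberCard, card_pos] at hα
  have hTβ : (fiber π T β).Nonempty := by rwa [mem_supp, fiberCard, card_pos] at hβ
  have hstab : stabilizer G (fiber π S α + fiber π T β) = ⊥ := by
    rw [← hfiber]
    refine stabilizer_fiber_eq_bot hπ hap (fun g hg => hfull _ ?_) (hfiber ▸ hSα.add hTβ)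
    exact supp_fiberCard π (S + T) ▸ mem_image_of_mem π hg
  have hbound : fiberCard π S α + fiberCard π T β ≤ fiberCard π (S + T) (α + β) + 1 := by
    simpa [hstab, hfiber, fiberCard] using kneser hSα hTβ
  obtain ⟨hS, hT⟩ := W.eq_of_ne_of_add_le hα hβ hfull hbound
  simp only [supp_fiberCard] at hS hT
  exact ⟨quasiPeriodic_of_fiberCard_eq hπ fun g hg => hS _ (mem_image_of_mem π hg),
    quasiPeriodic_of_fiberCard_eq hπ fun g hg => hT _ (mem_image_of_mem π hg)⟩

end Quotient

end CriticalPair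

/-- The `2|G|/3` theorem. -/
theorem stmt16 {G : Type*} [AddCommGroup G] [Fintype G] [DecidableEq G] (S T : Finset G)
    (hG2 : 2 ≤ Nat.card G)
    (hgen : AddSubgroup.closure (S : Set G) = ⊤)
    (hST : S.card ≤ T.card)
    (hap : IsAperiodic (S + T))
    (h0S : (0 : G) ∈ S) (h0T : (0 : G) ∈ T)
    (heq : (S + T).card + 1 = S.card + T.card)
    (hbound : 3 * (S + T).card ≤ 2 * Nat.card G + 2)
    (H : AddSubgroup G) (hH : IsHyperAtom S H) :
    QuasiPeriodic (H : Set G) (S : Set G) ∧ QuasiPeriodic (H : Set G) (T : Set G) ∧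
      ∃ d : G ⧸ H, IsAPWith d (S.image (QuotientAddGroup.mk' H)) ∧
        IsAPWith d (T.image (QuotientAddGroup.mk' H)) := by
  let π := QuotientAddGroup.mk' H
  have hπ : Function.Surjective π := QuotientAddGroup.mk'_surjective H
  have hker : π.ker = H := QuotientAddGroup.ker_mk' H
  rw [← hker] at hH
  have W := CriticalPair.cosetWeights_fiberCard hπ h0S hgen
    (CriticalPair.isFragment_elems_of_isHyperAtom hH) hST heq hbound
  have hE := CriticalPair.expandsSubgroups_image hπ ⟨0, h0S⟩ hH
  obtain ⟨d, hd, hS, hT⟩ := W.exists_isAPWith (by rwa [CriticalPair.supp_fiberCard])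
  obtain ⟨α, hα, β, hβ, hunique, hfull⟩ := W.exists_uniqueAdd hd hS hT
  simp only [CriticalPair.supp_fiberCard] at hS hT hα hβ hunique hfull
  have hquasi := CriticalPair.quasiPeriodic_of_uniqueAdd hπ W hap hα hβ hunique hfull
  rw [hker] at hquasi
  exact ⟨hquasi.1, hquasi.2, d, by convert hS, by convert hT⟩
end

section
/- Let A and B be finite subsets of an abelian group G with |A + B| = |A| + |B| - 1, and suppose A + B is periodic with period group Q ≠ {0}. Let ψ : G → G/Q be the canonical morphism and suppose there is c ∈ A + B with |(c - A) ∩ B| = 1. Write the Q-coset decompositions A = A₀ ∪ ⋯ ∪ A_u and B = B₀ ∪ ⋯ ∪ B_t with c ∈ A₀ + B₀. Then |ψ(A) + ψ(B)| = |ψ(A)| + |ψ(B)| - 1, |Aᵢ| = |Q| for all i ≥ 1, |Bⱼ| = |Q| for all j ≥ 1, and |A₀| + |B₀| ≤ |Q| + 1. -/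
open scoped Pointwise Classical

/-!
Let `q` be the order of `Q` and `ψ : G → G ⧸ Q`. As `ψ (A + B)` is aperiodic, Kneser's theorem gives
`|ψ A| + |ψ B| ≤ |ψ (A + B)| + 1`. Multiplying by `q` and using `|A + B| = q |ψ (A + B)|`, this says
that `A` and `B` together miss at most `q - 1` points of the `Q`-cosets they meet. On the other
hand `c - A₀` and `B₀` lie in one `Q`-coset and share a single point, so `A₀` and `B₀` alone miss at
least `q - 1` points. Hence equality holds in Kneser's bound and the other coset parts miss nothing.

For Kneser's theorem itself, the Dyson transform puts every point of `A + B` into a set `C ⊆ A + B`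
with `|A| + |B| ≤ |C| + |stabilizer C|`, and the sets with this property are closed under union.
-/

section Development

open Finset AddAction

section CosetCard

variable {G : Type*} [AddGroup G] {H : AddSubgroup G} {S : Finset G} {x : G}

theorem natCard_le_card_of_forall_add_mem (h : ∀ g ∈ H, x + g ∈ S) : Nat.card H ≤ #S := by
  have hinj : Function.Injective fun g : H ↦ (⟨x + g, h g g.2⟩ : S) := fun a b hab ↦ by
    simpa using hab
  simpa using Nat.card_le_card_of_injective _ hinj

theorem card_le_natCard_of_forall_sub_mem [Finite H] (h : ∀ y ∈ S, y - x ∈ H) :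
    #S ≤ Nat.card H := by
  have hinj : Function.Injective fun y : S ↦ (⟨y - x, h y y.2⟩ : H) := fun a b hab ↦ by
    exact Subtype.ext (sub_left_injective (congrArg Subtype.val hab))
  simpa using Nat.card_le_card_of_injective _ hinj

theorem card_filter_mk'_eq_le [H.Normal] [Finite H] [DecidableEq (G ⧸ H)] (S : Finset G)
    (y : G ⧸ H) : #{x ∈ S | QuotientAddGroup.mk' H x = y} ≤ Nat.card H := by
  obtain ⟨z, rfl⟩ := QuotientAddGroup.mk'_surjective H y
  refine card_le_natCard_of_forall_sub_mem (x := z) fun x hx ↦ ?_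
  rw [← QuotientAddGroup.eq_iff_sub_mem]
  exact (mem_filter.1 hx).2

theorem card_filter_sub_mem_add_card_filter_sub_mem_le {H₁ H₂ : AddSubgroup G}
    [Finite (H₁ ⊓ H₂ : AddSubgroup G)] (S : Finset G) (x : G) :
    #{z ∈ S | z - x ∈ H₁} + #{z ∈ S | z - x ∈ H₂} ≤
      #S + Nat.card (H₁ ⊓ H₂ : AddSubgroup G) := by
  have hunion : #({z ∈ S | z - x ∈ H₁} ∪ {z ∈ S | z - x ∈ H₂}) ≤ #S :=
    card_le_card (union_subset (filter_subset _ _) (filter_subset _ _))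
  have hinter : #({z ∈ S | z - x ∈ H₁} ∩ {z ∈ S | z - x ∈ H₂}) ≤
      Nat.card (H₁ ⊓ H₂ : AddSubgroup G) :=
    card_le_natCard_of_forall_sub_mem (x := x) fun z hz ↦
      ⟨(mem_filter.1 (mem_inter.1 hz).1).2, (mem_filter.1 (mem_inter.1 hz).2).2⟩
  have := card_union_add_card_inter {z ∈ S | z - x ∈ H₁} {z ∈ S | z - x ∈ H₂}
  omega

end CosetCard

section Kneser

variable {G : Type*} [AddCommGroup G] [DecidableEq G]

theorem add_mem_iff_of_mem_stabilizer {C : Finset G} {g x : G} (hg : g ∈ stabilizer G C) :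
    x + g ∈ C ↔ x ∈ C := by
  rw [add_comm]
  exact mem_stabilizer_finset.1 hg x

theorem finite_stabilizer {C : Finset G} (hC : C.Nonempty) : Finite (stabilizer G C) := by
  rw [← stabilizer_coe_finset]
  exact stabilizer_finite hC C.finite_toSet

section Union

variable {C₁ C₂ : Finset G} {H₁ H₂ : AddSubgroup G} {x y : G}

theorem natCard_le_card_filter_sdiff_add_card_filter_sdiff (h₁ : H₁ ≤ stabilizer G C₁)
    (h₂ : H₂ ≤ stabilizer G C₂) (hx : x ∈ C₁) (hy : y ∉ C₁) (hxy : y - x ∈ H₁ ⊔ H₂) :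
    Nat.card H₁ ≤ #{z ∈ C₁ \ C₂ | z - x ∈ H₁} + #{z ∈ C₂ \ C₁ | z - y ∈ H₁} := by
  obtain ⟨u, hu, v, hv, huv⟩ := AddSubgroup.mem_sup.1 hxy
  obtain rfl : y = x + v + u := by rw [eq_add_of_sub_eq' huv.symm]; abel
  have hxv : x + v ∉ C₁ := by rwa [← add_mem_iff_of_mem_stabilizer (h₁ hu)]
  -- Translation by `v` carries `(x + H₁) ∩ C₂` into `C₂ \ C₁`.
  have hcover : ∀ g ∈ H₁, x + g ∈ {z ∈ C₁ \ C₂ | z - x ∈ H₁} ∪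
      {z ∈ C₂ \ C₁ | z - (x + v + u) ∈ H₁}.image (· - v) := fun g hg ↦ by
    have hxg : x + g ∈ C₁ := (add_mem_iff_of_mem_stabilizer (h₁ hg)).2 hx
    by_cases hg₂ : x + g ∈ C₂
    · refine mem_union_right _ (mem_image.2 ⟨x + g + v, ?_, add_sub_cancel_right _ _⟩)
      have hgv : x + g + v ∉ C₁ := by
        rwa [add_right_comm, add_mem_iff_of_mem_stabilizer (h₁ hg)]
      have hsub : x + g + v - (x + v + u) = g - u := by abel
      rw [mem_filter, mem_sdiff, hsub]
      exact ⟨⟨(add_mem_iff_of_mem_stabilizer (h₂ hv)).2 hg₂, hgv⟩, H₁.sub_mem hg hu⟩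
    · refine mem_union_left _ (mem_filter.2 ⟨mem_sdiff.2 ⟨hxg, hg₂⟩, ?_⟩)
      rwa [add_sub_cancel_left]
  calc
    Nat.card H₁ ≤ _ := natCard_le_card_of_forall_add_mem hcover
    _ ≤ _ := card_union_le _ _
    _ ≤ _ := Nat.add_le_add_left card_image_le _

theorem min_natCard_le_card_sdiff (h₁ : H₁ ≤ stabilizer G C₁) (h₂ : H₂ ≤ stabilizer G C₂)
    (hx : x ∈ C₁ \ C₂) (h : ∀ y ∈ C₂ \ C₁, y - x ∉ H₁ ⊔ H₂) :
    min (Nat.card H₁) (Nat.card H₂) ≤ #(C₁ \ C₂) := by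
  obtain ⟨hx₁, hx₂⟩ := mem_sdiff.1 hx
  have hstab₁ : ∀ g ∈ H₁, ∀ z, z + g ∈ C₁ ↔ z ∈ C₁ := fun g hg _ ↦
    add_mem_iff_of_mem_stabilizer (h₁ hg)
  have hstab₂ : ∀ g ∈ H₂, ∀ z, z + g ∈ C₂ ↔ z ∈ C₂ := fun g hg _ ↦
    add_mem_iff_of_mem_stabilizer (h₂ hg)
  by_cases hdisj : ∀ u ∈ H₁, x + u ∉ C₂
  · exact min_le_of_left_le <| natCard_le_card_of_forall_add_mem fun u hu ↦
      mem_sdiff.2 ⟨(hstab₁ u hu x).2 hx₁, hdisj u hu⟩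
  · push Not at hdisj
    obtain ⟨u, hu, hxu⟩ := hdisj
    refine min_le_of_right_le <| natCard_le_card_of_forall_add_mem (x := x) fun v hv ↦
      mem_sdiff.2 ⟨?_, (hstab₂ v hv x).not.2 hx₂⟩
    by_contra hxv
    refine h (x + u + v) (mem_sdiff.2 ⟨(hstab₂ v hv _).2 hxu, ?_⟩) ?_
    · rwa [add_right_comm, hstab₁ u hu]
    · rw [add_assoc, add_sub_cancel_left]
      exact AddSubgroup.add_mem_sup hu hv

theorem min_card_add_natCard_le_card_union_add_natCard_inf
    (h₁ : H₁ ≤ stabilizer G C₁) (h₂ : H₂ ≤ stabilizer G C₂)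
    (h₁₂ : ¬ C₁ ⊆ C₂) (h₂₁ : ¬ C₂ ⊆ C₁) :
    min (#C₁ + Nat.card H₁) (#C₂ + Nat.card H₂) ≤
      #(C₁ ∪ C₂) + Nat.card (H₁ ⊓ H₂ : AddSubgroup G) := by
  obtain ⟨x, hx⟩ := sdiff_nonempty.2 h₁₂
  obtain ⟨y, hy⟩ := sdiff_nonempty.2 h₂₁
  have := finite_stabilizer ⟨x, (mem_sdiff.1 hx).1⟩
  have : Finite (H₁ ⊓ H₂ : AddSubgroup G) :=
    Finite.of_injective _ (AddSubgroup.inclusion_injective (inf_le_left.trans h₁))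
  have hunion₁ : #(C₂ \ C₁) + #C₁ = #(C₁ ∪ C₂) := by rw [card_sdiff_add_card, union_comm]
  have hunion₂ : #(C₁ \ C₂) + #C₂ = #(C₁ ∪ C₂) := card_sdiff_add_card _ _
  by_cases h : ∃ x ∈ C₁ \ C₂, ∃ y ∈ C₂ \ C₁, y - x ∈ H₁ ⊔ H₂
  · obtain ⟨x, hx, y, hy, hxy⟩ := h
    have hyx : x - y ∈ H₂ ⊔ H₁ := by rwa [sup_comm, sub_mem_comm_iff]
    have hle₁ := natCard_le_card_filter_sdiff_add_card_filter_sdiff h₁ h₂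
      (mem_sdiff.1 hx).1 (mem_sdiff.1 hy).2 hxy
    have hle₂ := natCard_le_card_filter_sdiff_add_card_filter_sdiff h₂ h₁
      (mem_sdiff.1 hy).1 (mem_sdiff.1 hx).2 hyx
    have hsum₁ := card_filter_sub_mem_add_card_filter_sub_mem_le (H₁ := H₁) (H₂ := H₂) (C₁ \ C₂) x
    have hsum₂ := card_filter_sub_mem_add_card_filter_sub_mem_le (H₁ := H₁) (H₂ := H₂) (C₂ \ C₁) y
    omega
  · push Not at h
    have hle₁ := min_natCard_le_card_sdiff h₁ h₂ hx (h x hx)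
    have hle₂ := min_natCard_le_card_sdiff h₂ h₁ hy fun z hz hzy ↦ h z hz y hy <| by
      rwa [sup_comm, sub_mem_comm_iff]
    omega

theorem min_card_add_natCard_stabilizer_le_union (C₁ C₂ : Finset G) :
    min (#C₁ + Nat.card (stabilizer G C₁)) (#C₂ + Nat.card (stabilizer G C₂)) ≤
      #(C₁ ∪ C₂) + Nat.card (stabilizer G (C₁ ∪ C₂)) := by
  by_cases h₁₂ : C₁ ⊆ C₂
  · rw [union_eq_right.2 h₁₂]
    exact min_le_right _ _
  by_cases h₂₁ : C₂ ⊆ C₁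
  · rw [union_eq_left.2 h₂₁]
    exact min_le_left _ _
  have hC₁ : C₁.Nonempty := (sdiff_nonempty.2 h₁₂).mono sdiff_subset
  have := finite_stabilizer (hC₁.mono (subset_union_left (s₂ := C₂)))
  have hinf : stabilizer G C₁ ⊓ stabilizer G C₂ ≤ stabilizer G (C₁ ∪ C₂) := fun g hg ↦ by
    rw [mem_stabilizer_iff, vadd_finset_union, hg.1, hg.2]
  exact (min_card_add_natCard_le_card_union_add_natCard_inf le_rfl le_rfl h₁₂ h₂₁).trans <|
    Nat.add_le_add_left (AddSubgroup.card_le_of_le hinf) _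

end Union

/-- The subsets `C` of `A + B` that satisfy the bound which Kneser's theorem asserts for `A + B`
itself: the theorem is proved by enlarging such a `C` until it is all of `A + B`. -/
structure IsKneserSubset (A B C : Finset G) : Prop where
  subset : C ⊆ A + B
  card_le : #A + #B ≤ #C + Nat.card (stabilizer G C)

theorem IsKneserSubset.union {A B C D : Finset G} (hC : IsKneserSubset A B C)
    (hD : IsKneserSubset A B D) : IsKneserSubset A B (C ∪ D) where
  subset := union_subset hC.subset hD.subset
  card_le := (le_min hC.card_le hD.card_le).trans (min_card_add_natCard_stabilizer_le_union C D)

theorem IsKneserSubset.of_addDysonETransform {A B C : Finset G} {e : G}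
    (hC : IsKneserSubset (addDysonETransform e (A, B)).1 (addDysonETransform e (A, B)).2 C) :
    IsKneserSubset A B C where
  subset := hC.subset.trans (addDysonETransform.subset e (A, B))
  card_le := (addDysonETransform.card e (A, B)).symm.trans_le hC.card_le

theorem isKneserSubset_self_left {A B : Finset G} (hA : A.Nonempty) (h0 : 0 ∈ B)
    (hB : ∀ b ∈ B, b ∈ stabilizer G A) : IsKneserSubset A B A where
  subset := subset_add_left A h0
  card_le := by
    have := finite_stabilizer hA
    exact Nat.add_le_add_left
      (card_le_natCard_of_forall_sub_mem (x := 0) (by simpa only [sub_zero] using hB)) _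

theorem exists_addDysonETransform_snd_ssubset {A B : Finset G}
    (hB : ¬ ∀ b ∈ B, b ∈ stabilizer G A) : ∃ e ∈ A, (addDysonETransform e (A, B)).2 ⊂ B := by
  simp only [mem_stabilizer_finset'] at hB
  push Not at hB
  obtain ⟨b, hb, e, he, hbe⟩ := hB
  refine ⟨e, he, Finset.ssubset_iff_subset_ne.2 ⟨inter_subset_left, fun heq ↦ hbe ?_⟩⟩
  have heb := mem_neg_vadd_finset_iff.1 (mem_inter.1 (heq.symm.subset hb)).2
  rwa [vadd_eq_add, add_comm] at heb

theorem exists_isKneserSubset_superset_of_zero_mem {A B : Finset G} (hA : A.Nonempty)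
    (h0 : 0 ∈ B) : ∃ C, IsKneserSubset A B C ∧ A ⊆ C := by
  induction B using Finset.strongInduction generalizing A with
  | H B ih =>
    by_cases hB : ∀ b ∈ B, b ∈ stabilizer G A
    · exact ⟨A, isKneserSubset_self_left hA h0 hB, Subset.rfl⟩
    · obtain ⟨e, he, hlt⟩ := exists_addDysonETransform_snd_ssubset hB
      have h0' : 0 ∈ (addDysonETransform e (A, B)).2 :=
        mem_inter.2 ⟨h0, mem_neg_vadd_finset_iff.2 (by rwa [vadd_eq_add, add_zero])⟩
      obtain ⟨C, hC, hAC⟩ := ih _ hlt (hA.mono subset_union_left) h0'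
      exact ⟨C, hC.of_addDysonETransform, subset_union_left.trans hAC⟩

theorem exists_isKneserSubset_mem {A B : Finset G} {s : G} (hs : s ∈ A + B) :
    ∃ C, IsKneserSubset A B C ∧ s ∈ C := by
  obtain ⟨a, ha, b, hb, rfl⟩ := mem_add.1 hs
  have h0 : (0 : G) ∈ -b +ᵥ B := mem_vadd_finset.2 ⟨b, hb, neg_add_cancel b⟩
  have hab : a + b ∈ b +ᵥ A := mem_vadd_finset.2 ⟨a, ha, add_comm b a⟩
  have hsum : (b +ᵥ A) + (-b +ᵥ B) = A + B := by
    rw [add_vadd_comm, vadd_add_assoc, neg_vadd_vadd]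
  obtain ⟨C, ⟨hCsub, hCcard⟩, hAC⟩ := exists_isKneserSubset_superset_of_zero_mem ⟨_, hab⟩ h0
  rw [card_vadd_finset, card_vadd_finset] at hCcard
  exact ⟨C, ⟨hsum ▸ hCsub, hCcard⟩, hAC hab⟩

theorem exists_isKneserSubset_superset {A B S : Finset G} (hS : S.Nonempty) (hSAB : S ⊆ A + B) :
    ∃ C, IsKneserSubset A B C ∧ S ⊆ C := by
  induction hS using Nonempty.cons_induction with
  | singleton s =>
    simpa only [singleton_subset_iff] using exists_isKneserSubset_mem (singleton_subset_iff.1 hSAB)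
  | cons s S _ _ ih =>
    rw [cons_subset] at hSAB
    obtain ⟨C, hC, hSC⟩ := ih hSAB.2
    obtain ⟨D, hD, hsD⟩ := exists_isKneserSubset_mem hSAB.1
    exact ⟨C ∪ D, hC.union hD,
      cons_subset.2 ⟨mem_union_right _ hsD, hSC.trans subset_union_left⟩⟩

theorem kneser {A B : Finset G} (hA : A.Nonempty) (hB : B.Nonempty) :
    #A + #B ≤ #(A + B) + Nat.card (stabilizer G (A + B)) := by
  obtain ⟨C, ⟨hCsub, hCcard⟩, hABC⟩ := exists_isKneserSubset_superset (hA.add hB) Subset.rfl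
  rwa [hCsub.antisymm hABC] at hCcard

end Kneser

section Fibers

variable {α β : Type*} [DecidableEq β] {A : Finset α} {f : α → β} {q : ℕ}

theorem card_add_mul_card_le_sum_card_fiber_add_mul_card_image
    (hq : ∀ y, #{x ∈ A | f x = y} ≤ q) {T : Finset β} (hT : T ⊆ A.image f) :
    #A + q * #T ≤ ∑ y ∈ T, #{x ∈ A | f x = y} + q * #(A.image f) := by
  have hrest : ∑ y ∈ A.image f \ T, #{x ∈ A | f x = y} ≤ #(A.image f \ T) * q :=
    sum_le_card_nsmul _ _ q fun y _ ↦ hq y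
  have hcard : #(A.image f) = #(A.image f \ T) + #T := (card_sdiff_add_card_eq_card hT).symm
  rw [card_eq_sum_card_image f A, ← sum_sdiff hT, hcard]
  linarith

theorem card_add_le_card_fiber_add_mul_card_image (hq : ∀ y, #{x ∈ A | f x = y} ≤ q) {a : α}
    (ha : a ∈ A) : #A + q ≤ #{x ∈ A | f x = f a} + q * #(A.image f) := by
  simpa using card_add_mul_card_le_sum_card_fiber_add_mul_card_image hq
    (singleton_subset_iff.2 (mem_image_of_mem f ha))

theorem card_fiber_eq_of_card_fiber_add_mul_card_image_le (hq : ∀ y, #{x ∈ A | f x = y} ≤ q)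
    {a₀ : α} (ha₀ : a₀ ∈ A) (hA : #{x ∈ A | f x = f a₀} + q * #(A.image f) ≤ #A + q) {a : α}
    (ha : a ∈ A) (hne : f a ≠ f a₀) : #{x ∈ A | f x = f a} = q := by
  have hpair := card_add_mul_card_le_sum_card_fiber_add_mul_card_image hq (T := {f a, f a₀}) <|
    insert_subset (mem_image_of_mem f ha) (singleton_subset_iff.2 (mem_image_of_mem f ha₀))
  rw [card_pair hne, sum_pair hne] at hpair
  exact (hq (f a)).antisymm (by linarith)

end Fibers

section Quotient

variable {G : Type*} [AddCommGroup G] [DecidableEq G] {A B : Finset G} {Q : AddSubgroup G}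
  [DecidableEq (G ⧸ Q)]

theorem stabilizer_image_mk'_eq_bot (hQ : Q = stabilizer G A) :
    stabilizer (G ⧸ Q) (A.image (QuotientAddGroup.mk' Q)) = ⊥ := by
  obtain rfl : Q = stabilizer G (A : Set G) := by rw [hQ, stabilizer_coe_finset]
  rw [← stabilizer_coe_finset, coe_image]
  exact stabilizer_image_coe_quotient _

theorem natCard_mul_card_image_mk' (hQ : Q = stabilizer G A) :
    Nat.card Q * #(A.image (QuotientAddGroup.mk' Q)) = #A := by
  obtain rfl : Q = stabilizer G (A : Set G) := by rw [hQ, stabilizer_coe_finset]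
  have hcard := AddSubgroup.card_add_eq_card_addSubgroup_add_card_quotient
    (stabilizer G (A : Set G)) A
  rw [add_stabilizer_self, Nat.card_coe_set_eq, Set.ncard_coe_finset] at hcard
  rw [hcard, ← Set.ncard_coe_finset, coe_image, Nat.card_coe_set_eq]
  rfl

theorem card_filter_mk'_eq_add_card_filter_mk'_eq_le [Finite Q] (A B : Finset G)
    (a b : G) :
    #{x ∈ A | QuotientAddGroup.mk' Q x = QuotientAddGroup.mk' Q a} +
        #{x ∈ B | QuotientAddGroup.mk' Q x = QuotientAddGroup.mk' Q b} ≤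
      Nat.card Q + #((({a + b} : Finset G) - A) ∩ B) := by
  set ψ := QuotientAddGroup.mk' Q
  set A₀ := {x ∈ A | ψ x = ψ a}
  set B₀ := {x ∈ B | ψ x = ψ b}
  have hunion : #(({a + b} - A₀) ∪ B₀) ≤ Nat.card Q := by
    have hfiber : ∀ y ∈ ({a + b} - A₀) ∪ B₀, ψ y = ψ b := fun y hy ↦ by
      obtain hy | hy := mem_union.1 hy
      · rw [singleton_sub, mem_image] at hy
        obtain ⟨x, hx, rfl⟩ := hy
        rw [map_sub, map_add, (mem_filter.1 hx).2, add_sub_cancel_left]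
      · exact (mem_filter.1 hy).2
    rw [← filter_true_of_mem hfiber]
    exact card_filter_mk'_eq_le _ _
  have hinter : #(({a + b} - A₀) ∩ B₀) ≤ #(({a + b} - A) ∩ B) :=
    card_le_card <| inter_subset_inter (sub_subset_sub_left (filter_subset _ _))
      (filter_subset _ _)
  have hcard := card_union_add_card_inter ({a + b} - A₀) B₀
  rw [singleton_sub, card_image_of_injective _ sub_right_injective] at hcard
  rw [singleton_sub] at hunion hinter
  omega

theorem kneser_image_mk' (hQ : Q = stabilizer G (A + B)) (hA : A.Nonempty)
    (hB : B.Nonempty) :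
    #(A.image (QuotientAddGroup.mk' Q)) + #(B.image (QuotientAddGroup.mk' Q)) ≤
      #(A.image (QuotientAddGroup.mk' Q) + B.image (QuotientAddGroup.mk' Q)) + 1 := by
  have hkneser := kneser (hA.image (QuotientAddGroup.mk' Q)) (hB.image (QuotientAddGroup.mk' Q))
  rwa [← image_add, stabilizer_image_mk'_eq_bot hQ, AddSubgroup.card_bot, image_add] at hkneser

end Quotient

end Development

theorem stmt17 {G : Type*} [AddCommGroup G] [DecidableEq G] (A B : Finset G)
    (Q : AddSubgroup G)
    (hQ : ∀ g : G, (A + B) + ({g} : Finset G) = A + B ↔ g ∈ Q)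
    (hQne : Q ≠ ⊥)
    (hcard : (A + B).card + 1 = A.card + B.card)
    (c : G) (hc : c ∈ A + B)
    (huniq : ((({c} : Finset G) - A) ∩ B).card = 1)
    (a₀ b₀ : G) (ha₀ : a₀ ∈ A) (hb₀ : b₀ ∈ B) (hab : a₀ + b₀ = c) :
    ((A.image (QuotientAddGroup.mk' Q) + B.image (QuotientAddGroup.mk' Q)).card + 1
        = (A.image (QuotientAddGroup.mk' Q)).card + (B.image (QuotientAddGroup.mk' Q)).card) ∧
    (∀ a ∈ A, QuotientAddGroup.mk' Q a ≠ QuotientAddGroup.mk' Q a₀ →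
      (A.filter (fun x => QuotientAddGroup.mk' Q x = QuotientAddGroup.mk' Q a)).card
        = Nat.card Q) ∧
    (∀ b ∈ B, QuotientAddGroup.mk' Q b ≠ QuotientAddGroup.mk' Q b₀ →
      (B.filter (fun x => QuotientAddGroup.mk' Q x = QuotientAddGroup.mk' Q b)).card
        = Nat.card Q) ∧
    (A.filter (fun x => QuotientAddGroup.mk' Q x = QuotientAddGroup.mk' Q a₀)).card
        + (B.filter (fun x => QuotientAddGroup.mk' Q x = QuotientAddGroup.mk' Q b₀)).card
      ≤ Nat.card Q + 1 := by
  have hstab : Q = AddAction.stabilizer G (A + B) := by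
    ext g
    rw [← hQ, AddAction.mem_stabilizer_iff, Finset.add_singleton, op_vadd_eq_vadd]
  have : Finite Q := hstab ▸ finite_stabilizer ⟨c, hc⟩
  have hkneser := kneser_image_mk' hstab ⟨a₀, ha₀⟩ ⟨b₀, hb₀⟩
  have hsum := natCard_mul_card_image_mk' hstab
  rw [Finset.image_add] at hsum
  have hfiberA := card_filter_mk'_eq_le (H := Q) A
  have hfiberB := card_filter_mk'_eq_le (H := Q) B
  have hA := card_add_le_card_fiber_add_mul_card_image hfiberA ha₀
  have hB := card_add_le_card_fiber_add_mul_card_image hfiberB hb₀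
  have hpair := card_filter_mk'_eq_add_card_filter_mk'_eq_le (Q := Q) A B a₀ b₀
  rw [hab, huniq] at hpair
  have himage := hkneser.antisymm' <|
    Nat.le_of_mul_le_mul_left (by linarith) (Nat.card_pos (α := Q))
  have hmul := congrArg (Nat.card Q * ·) himage
  simp only [mul_add, mul_one, hsum] at hmul
  exact ⟨himage,
    fun a ↦ card_fiber_eq_of_card_fiber_add_mul_card_image_le hfiberA ha₀ (by linarith),
    fun b ↦ card_fiber_eq_of_card_fiber_add_mul_card_image_le hfiberB hb₀ (by linarith),
    hpair⟩
end
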